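/- For every integer k ≥ 2 and every real 0 < δ ≤ 1 there exist a positive integer Λ₀ and a real Θ₀ with 0 < Θ₀ ≤ δ²/8 (both depending only on k and δ) with the following property. Let L be a nonempty finite subset of ℕ, let A ⊆ [k]^{<ℕ} satisfy dens_{[k]^ℓ}(A) ≥ δ for every ℓ ∈ L, let n ≥ 1 and assume |L| ≥ Λ₀ + ⌈2 Θ₀^{−1} n⌉. Then, setting L₀ to be the set of the first Λ₀ elements of L, either (i) there exist a subset L′ of L ∖ L₀ with |L′| ≥ n and a word t₀ ∈ [k]^{ℓ₀} for some ℓ₀ ∈ L₀ such that dens_{[k]^{ℓ−ℓ₀}}( { s ∈ [k]^{<ℕ} : t₀⌢s ∈ A } ) ≥ δ + δ²/8 for every ℓ ∈ L′, or (ii) there exist a subset L″ of L ∖ L₀ with |L″| ≥ n and a Carlson–Simpson line V of [k]^{<ℕ} contained in A with level set L(V) ⊆ L₀ such that, setting ℓ₁ to be the unique integer with V(1) ⊆ [k]^{ℓ₁}, we have dens_{[k]^{ℓ−ℓ₁}}( { s ∈ [k]^{<ℕ} : t⌢s ∈ A for every t ∈ V(1) } ) ≥ Θ₀/2 for every ℓ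 ∈ L″. -/

import Mathlib

/-- A word over `k`: a finite sequence with values in `[k]`. -/
abbrev Word (k : ℕ) := List (Fin k)

/-- A "possibly variable" letter sequence: `none` plays the role of the variable `v`. -/
abbrev VWord (k : ℕ) := List (Option (Fin k))

/-- Substitution of the letter `a` for every occurrence of the variable. -/
def subst {k : ℕ} (w : VWord k) (a : Fin k) : Word k := w.map (fun o => o.getD a)

/-- `w` is a left variable word: its leftmost letter is the variable `v`. -/
def IsLeftVar {k : ℕ} (w : VWord k) : Prop := w.head? = some none

/-- The density `dens_{[k]^n}(A) = |A ∩ [k]^n| / k^n`. -/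
noncomputable def dens (k n : ℕ) (A : Set (Word k)) : ℝ :=
  (Set.ncard {x ∈ A | x.length = n} : ℝ) / (k : ℝ) ^ n

namespace DCS

open Finset

/-! ### Averaging functionals -/

/-- `T` is a positive normalised linear functional supported on `S`. -/
structure IsAv {X : Type} (S : Set X) (T : (X → ℝ) → ℝ) : Prop where
  add : ∀ f g, T (fun x => f x + g x) = T f + T g
  smul : ∀ (c : ℝ) f, T (fun x => c * f x) = c * T f
  mono : ∀ f g, (∀ x ∈ S, f x ≤ g x) → T f ≤ T g
  const : ∀ c : ℝ, T (fun _ => c) = c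

namespace IsAv

variable {X : Type} {S : Set X} {T : (X → ℝ) → ℝ}

theorem neg (h : IsAv S T) (f : X → ℝ) : T (fun x => - f x) = - T f := by
  have := h.smul (-1) f
  simpa using this

theorem sub (h : IsAv S T) (f g : X → ℝ) : T (fun x => f x - g x) = T f - T g := by
  have := h.add f (fun x => - g x)
  rw [h.neg] at this
  simpa [sub_eq_add_neg] using this

theorem mul_const (h : IsAv S T) (c : ℝ) (f : X → ℝ) : T (fun x => f x * c) = T f * c := by
  have := h.smul c f
  rw [mul_comm (T f)]
  rw [← this]
  congr 1
  funext x
  ring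

theorem div_const (h : IsAv S T) (c : ℝ) (f : X → ℝ) : T (fun x => f x / c) = T f / c := by
  simp only [div_eq_mul_inv]
  exact h.mul_const _ _

theorem sum (h : IsAv S T) {ι : Type} (s : Finset ι) (F : ι → X → ℝ) :
    T (fun x => ∑ i ∈ s, F i x) = ∑ i ∈ s, T (F i) := by
  classical
  induction s using Finset.induction_on with
  | empty => simpa using h.const 0
  | insert a s ha ih =>
    rw [Finset.sum_insert ha, ← ih, ← h.add]
    congr 1
    funext x
    rw [Finset.sum_insert ha]

theorem congr (h : IsAv S T) (f g : X → ℝ) (hfg : ∀ x ∈ S, f x = g x) : T f = T g :=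
  le_antisymm (h.mono _ _ fun x hx => (hfg x hx).le) (h.mono _ _ fun x hx => (hfg x hx).ge)

theorem le_const (h : IsAv S T) (f : X → ℝ) (c : ℝ) (hf : ∀ x ∈ S, f x ≤ c) : T f ≤ c := by
  have := h.mono f (fun _ => c) hf
  rwa [h.const] at this

theorem const_le (h : IsAv S T) (f : X → ℝ) (c : ℝ) (hf : ∀ x ∈ S, c ≤ f x) : c ≤ T f := by
  have := h.mono (fun _ => c) f hf
  rwa [h.const] at this

theorem nonneg (h : IsAv S T) (f : X → ℝ) (hf : ∀ x ∈ S, 0 ≤ f x) : 0 ≤ T f :=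
  h.const_le f 0 hf

theorem exists_gt (h : IsAv S T) (f : X → ℝ) (c : ℝ) (hc : c < T f) : ∃ x ∈ S, c < f x := by
  by_contra hcon
  push Not at hcon
  exact absurd (h.le_const f c hcon) (not_le.mpr hc)

theorem abs_le (h : IsAv S T) (f g : X → ℝ) (hf : ∀ x ∈ S, |f x| ≤ g x) : |T f| ≤ T g := by
  rw [_root_.abs_le]
  constructor
  · rw [← h.neg]
    exact h.mono _ _ fun x hx => (_root_.abs_le.mp (hf x hx)).1
  · exact h.mono _ _ fun x hx => (_root_.abs_le.mp (hf x hx)).2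

theorem bind {Y Z : Type} (h : IsAv S T) {S' : X → Set Y} {T' : X → (Y → ℝ) → ℝ}
    (h' : ∀ x, IsAv (S' x) (T' x)) (g : X → Y → Z) (S'' : Set Z)
    (hS : ∀ x ∈ S, ∀ y ∈ S' x, g x y ∈ S'') :
    IsAv S'' (fun f => T (fun x => T' x (fun y => f (g x y)))) where
  add := by
    intro f k
    rw [← h.add]
    congr 1
    funext x
    exact (h' x).add _ _
  smul := by
    intro c f
    rw [← h.smul]
    congr 1
    funext x
    exact (h' x).smul _ _
  mono := by
    intro f k hfk
    exact h.mono _ _ fun x hx => (h' x).mono _ _ fun y hy => hfk _ (hS x hx y hy)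
  const := by
    intro c
    show T (fun x => T' x (fun _ => c)) = c
    have : (fun x => T' x (fun _ => c)) = fun _ => c := funext fun x => (h' x).const c
    rw [this, h.const]

theorem weaken (h : IsAv S T) {S' : Set X} (hS : S ⊆ S') : IsAv S' T where
  add := h.add
  smul := h.smul
  mono := fun f g hfg => h.mono f g fun x hx => hfg x (hS hx)
  const := h.const

end IsAv

theorem IsAv.pure {X : Type} (x : X) : IsAv {x} (fun f : X → ℝ => f x) where
  add := fun _ _ => rfl
  smul := fun _ _ => rfl
  mono := fun f g h => h x rfl
  const := fun _ => rfl

/-- Uniform average over a nonempty finset. -/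
theorem IsAv.unif {X : Type} (s : Finset X) (hs : s.Nonempty) :
    IsAv (↑s : Set X) (fun f : X → ℝ => (∑ i ∈ s, f i) / (s.card : ℝ)) where
  add := by
    intro f g
    rw [Finset.sum_add_distrib, add_div]
  smul := by
    intro c f
    rw [← Finset.mul_sum, mul_div_assoc]
  mono := by
    intro f g h
    have : ∑ i ∈ s, f i ≤ ∑ i ∈ s, g i := Finset.sum_le_sum fun i hi => h i hi
    gcongr
  const := by
    intro c
    have : (s.card : ℝ) ≠ 0 := by
      exact_mod_cast hs.card_pos.ne'
    simp [Finset.sum_const]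
    field_simp

section avg

variable {α : Type} [Fintype α]

/-- letter average -/
noncomputable def la (f : α → ℝ) : ℝ := (∑ e, f e) / (Fintype.card α : ℝ)

theorem la_isAv [Nonempty α] : IsAv (Set.univ : Set α) (la (α := α)) := by
  have := IsAv.unif (Finset.univ : Finset α) Finset.univ_nonempty
  show IsAv _ (fun f : α → ℝ => (∑ e, f e) / (Fintype.card α : ℝ))
  simpa [Finset.card_univ] using this

/-- average over words of length `n` -/
noncomputable def avg : ℕ → (List α → ℝ) → ℝ
  | 0, f => f []
  | n + 1, f => la (fun e => avg n (fun x => f (e :: x)))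

@[simp] theorem avg_zero (f : List α → ℝ) : avg 0 f = f [] := rfl

theorem avg_succ (n : ℕ) (f : List α → ℝ) :
    avg (n + 1) f = la (fun e => avg n (fun x => f (e :: x))) := rfl

theorem avg_isAv [Nonempty α] (n : ℕ) : IsAv {x : List α | x.length = n} (avg (α := α) n) := by
  induction n with
  | zero =>
    have := IsAv.pure ([] : List α)
    exact this.weaken (by intro x hx; simp_all)
  | succ n ih =>
    exact la_isAv.bind (fun _ => ih) (fun e x => e :: x) _ (by intro e _ x hx; simp_all)

theorem avg_append (p q : ℕ) (f : List α → ℝ) :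
    avg (p + q) f = avg p (fun x => avg q (fun y => f (x ++ y))) := by
  induction p generalizing f with
  | zero => simp
  | succ p ih =>
    rw [Nat.succ_add, avg_succ, avg_succ]
    congr 1
    funext e
    rw [ih]
    rfl

theorem la_comm {X : Type} {S : Set X} {T : (X → ℝ) → ℝ} (h : IsAv S T) (F : α → X → ℝ) :
    la (fun e => T (F e)) = T (fun w => la (fun e => F e w)) := by
  unfold la
  rw [h.div_const, h.sum]

theorem avg_comm {X : Type} {S : Set X} {T : (X → ℝ) → ℝ} (h : IsAv S T) (n : ℕ)
    (F : List α → X → ℝ) :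
    avg n (fun x => T (F x)) = T (fun w => avg n (fun x => F x w)) := by
  induction n generalizing F with
  | zero => rfl
  | succ n ih =>
    simp only [avg_succ]
    rw [← la_comm h]
    congr 1
    funext e
    exact ih _

theorem avg_drop [Nonempty α] (p q : ℕ) (f : List α → ℝ) :
    avg (p + q) (fun x => f (x.drop p)) = avg q f := by
  rw [avg_append]
  rw [(avg_isAv p).congr _ (fun _ => avg q f)]
  · exact (avg_isAv p).const _
  · intro x hx
    congr 1
    funext y
    have : x.length = p := hx
    rw [← this, List.drop_left]

/-- A nonnegative function is pointwise bounded by its average times the number of words. -/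
theorem le_avg_mul [Nonempty α] (f : List α → ℝ) (hf : ∀ x, 0 ≤ f x) (t : List α) :
    f t ≤ (Fintype.card α : ℝ) ^ t.length * avg t.length f := by
  induction t generalizing f with
  | nil => simp
  | cons e t ih =>
    have hc : (0:ℝ) < Fintype.card α := by exact_mod_cast Fintype.card_pos
    have h1 := ih (fun x => f (e :: x)) (fun x => hf _)
    have h2 : avg t.length (fun x => f (e :: x)) ≤
        (Fintype.card α : ℝ) * avg (t.length + 1) f := by
      rw [avg_succ]
      unfold la
      rw [mul_div_cancel₀ _ hc.ne']
      exact Finset.single_le_sum (f := fun e => avg t.length (fun x => f (e :: x)))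
        (fun i _ => (avg_isAv t.length).nonneg _ fun x _ => hf _) (Finset.mem_univ e)
    calc f (e :: t) ≤ (Fintype.card α : ℝ) ^ t.length * avg t.length (fun x => f (e :: x)) := h1
      _ ≤ (Fintype.card α : ℝ) ^ t.length * ((Fintype.card α : ℝ) * avg (t.length + 1) f) := by
        gcongr
      _ = _ := by
        simp only [List.length_cons]
        ring

/-- Average over all words of length `< N`, uniform in the level. -/
noncomputable def D (N : ℕ) (f : List α → ℝ) : ℝ := (∑ ℓ ∈ range N, avg ℓ f) / (N : ℝ)

theorem D_isAv [Nonempty α] (N : ℕ) (hN : 1 ≤ N) :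
    IsAv {x : List α | x.length < N} (D (α := α) N) := by
  have h1 := IsAv.unif (range N) (by simpa using (by omega : N ≠ 0))
  have h2 := h1.bind (fun ℓ => avg_isAv (α := α) ℓ) (fun _ x => x) {x : List α | x.length < N}
    (by intro ℓ hℓ x hx; simp_all)
  show IsAv _ (fun f : List α → ℝ => (∑ ℓ ∈ range N, avg ℓ f) / (N : ℝ))
  simpa using h2

theorem D_comm {X : Type} {S : Set X} {T : (X → ℝ) → ℝ} (h : IsAv S T) (n : ℕ)
    (F : List α → X → ℝ) :
    D n (fun x => T (F x)) = T (fun w => D n (fun x => F x w)) := by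
  unfold D
  rw [h.div_const, h.sum]
  congr 1
  apply Finset.sum_congr rfl
  intro i _
  exact avg_comm h i F

theorem sum_range_mul_avg (q R : ℕ) (f : ℕ → ℝ) :
    ∑ ℓ ∈ range (q * R), f ℓ = ∑ j ∈ range q, ∑ r ∈ range R, f (j * R + r) := by
  induction q with
  | zero => simp
  | succ q ih =>
    rw [Finset.sum_range_succ, ← ih, Nat.succ_mul, Finset.sum_range_add]

theorem D_block [Nonempty α] (q R : ℕ) (f : List α → ℝ) :
    D (q * R) f =
      (∑ j ∈ range q, avg (j * R) (fun x => D R (fun y => f (x ++ y)))) / (q : ℝ) := by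
  unfold D
  rw [sum_range_mul_avg]
  have : ∀ j ∈ range q, avg (j * R) (fun x => (∑ r ∈ range R, avg r (fun y => f (x ++ y))) / (R:ℝ))
      = (∑ r ∈ range R, avg (j * R + r) f) / (R : ℝ) := by
    intro j _
    rw [(avg_isAv _).div_const, (avg_isAv _).sum]
    congr 1
    apply Finset.sum_congr rfl
    intro r _
    rw [avg_append]
  rw [Finset.sum_congr rfl this, ← Finset.sum_div, div_div]
  push_cast
  rw [mul_comm (q : ℝ)]

end avg

/-- Indicator of a proposition. -/
noncomputable def ind (p : Prop) : ℝ := by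
  classical exact if p then 1 else 0

theorem ind_true {p : Prop} (h : p) : ind p = 1 := by simp [ind, h]
theorem ind_false {p : Prop} (h : ¬ p) : ind p = 0 := by simp [ind, h]
theorem ind_nonneg (p : Prop) : 0 ≤ ind p := by
  by_cases h : p
  · rw [ind_true h]; norm_num
  · rw [ind_false h]
theorem ind_le_one (p : Prop) : ind p ≤ 1 := by
  by_cases h : p
  · rw [ind_true h]
  · rw [ind_false h]; norm_num
theorem ind_mono {p q : Prop} (h : p → q) : ind p ≤ ind q := by
  by_cases hp : p
  · rw [ind_true hp, ind_true (h hp)]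
  · rw [ind_false hp]; exact ind_nonneg q
theorem ind_pos {p : Prop} (h : 0 < ind p) : p := by
  by_contra hp
  rw [ind_false hp] at h
  exact lt_irrefl _ h


/-! ### Lines and semantic subspaces -/

/-- `A` contains a Carlson–Simpson line. -/
def HasLine {α : Type} (A : Set (List α)) : Prop :=
  ∃ (c : List α) (w : List (Option α)), c ∈ A ∧ ∀ a, c ++ a :: w.map (fun o => o.getD a) ∈ A

theorem HasLine.mono {α : Type} {A B : Set (List α)} (h : HasLine A) (hAB : A ⊆ B) :
    HasLine B := by
  obtain ⟨c, w, h1, h2⟩ := h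
  exact ⟨c, w, hAB h1, fun a => hAB (h2 a)⟩

/-- Weak density Carlson–Simpson property. -/
def TT (α : Type) [Fintype α] : Prop :=
  ∀ δ : ℝ, 0 < δ → ∃ N, 1 ≤ N ∧ ∀ A : Set (List α), δ ≤ D N (fun x => ind (x ∈ A)) → HasLine A

theorem TT.bounded {α : Type} [Fintype α] [Nonempty α] (h : TT α) (δ : ℝ) (hδ : 0 < δ) :
    ∃ N, 1 ≤ N ∧ ∀ A : Set (List α), δ ≤ D N (fun x => ind (x ∈ A)) →
      ∃ (c : List α) (w : List (Option α)), c ∈ A ∧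
        (∀ a, c ++ a :: w.map (fun o => o.getD a) ∈ A) ∧ c.length + 1 + w.length < N := by
  obtain ⟨N, hN, hT⟩ := h δ hδ
  refine ⟨N, hN, fun A hA => ?_⟩
  have h2 : δ ≤ D N (fun x => ind (x ∈ A ∩ {x | x.length < N})) := by
    refine hA.trans ((D_isAv N hN).mono _ _ fun x hx => ind_mono fun h => ⟨h, hx⟩)
  obtain ⟨c, w, h3, h4⟩ := hT _ h2
  refine ⟨c, w, h3.1, fun a => (h4 a).1, ?_⟩
  have := (h4 (Classical.arbitrary α)).2
  simp at this
  omega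

/-- A semantic strong subspace map. -/
structure SMap (C : Type) where
  ev : ∀ {β : Type}, (C → β) → List β → List β
  nat : ∀ {β γ : Type} (f : β → γ) (g : C → β) (x : List β),
    (ev g x).map f = ev (fun c => f (g c)) (x.map f)
  tree : ∀ {β : Type} (g : C → β) (x : List β) (e : β) (t : List β),
    ∃ s, ev g (x ++ e :: t) = ev g x ++ e :: s

namespace SMap

variable {C : Type}

theorem length_eq (φ : SMap C) {β γ : Type} (g : C → β) (g' : C → γ) (x : List β) (y : List γ)
    (h : x.length = y.length) : (φ.ev g x).length = (φ.ev g' y).length := by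
  have h1 := congrArg List.length (φ.nat (fun _ => ()) g x)
  have h2 := congrArg List.length (φ.nat (fun _ => ()) g' y)
  have h3 : x.map (fun _ => ()) = y.map (fun _ => ()) := by
    simp [List.map_const', h]
  rw [List.length_map] at h1 h2
  rw [h1, h2, h3]

theorem pullback (φ : SMap C) (A : Set (List C)) (h : HasLine {t | φ.ev id t ∈ A}) :
    HasLine A := by
  obtain ⟨c, w, h1, h2⟩ := h
  obtain ⟨s, hs⟩ := φ.tree some (c.map some) none w
  refine ⟨φ.ev id c, s, h1, fun a => ?_⟩
  have h3 := h2 a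
  have h4 := congrArg (List.map (fun o => Option.getD o a)) hs
  rw [φ.nat, List.map_append, List.map_append, φ.nat] at h4
  simp only [List.map_append, List.map_cons, List.map_map, Option.getD_none] at h4
  have e1 : c.map ((fun o => Option.getD o a) ∘ some) = c := by
    rw [show ((fun o => Option.getD o a) ∘ some) = (id : C → C) from rfl, List.map_id]
  rw [e1] at h4
  have h5 : φ.ev id (c ++ a :: w.map (fun o => o.getD a)) ∈ A := h3
  have h6 : φ.ev id (c ++ a :: w.map (fun o => o.getD a)) =
    φ.ev id c ++ a :: s.map (fun o => o.getD a) := h4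
  rwa [h6] at h5

/-- composition -/
def comp (φ ψ : SMap C) : SMap C where
  ev g x := φ.ev g (ψ.ev g x)
  nat f g x := by rw [φ.nat, ψ.nat]
  tree g x e t := by
    obtain ⟨s, hs⟩ := ψ.tree g x e t
    rw [hs]
    exact φ.tree g _ e s

/-- change of constants -/
def cmap {C' : Type} (h : C → C') (φ : SMap C) : SMap C' where
  ev g x := φ.ev (fun c => g (h c)) x
  nat f g x := by rw [φ.nat]
  tree g x e t := φ.tree _ x e t

/-- identity -/
def idm : SMap C where
  ev _ x := x
  nat _ _ _ := rfl
  tree g x e t := ⟨t, rfl⟩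

/-- evaluation of a prepended variable -/
def pvEv (V : SMap (Option C)) {β : Type} (g : C → β) : List β → List β
  | [] => []
  | e :: t => e :: V.ev (fun o => o.elim e g) t

/-- prepend a variable -/
def prepVar (V : SMap (Option C)) : SMap C where
  ev g x := pvEv V g x
  nat f g x := by
    cases x with
    | nil => rfl
    | cons e t =>
      simp only [pvEv, List.map_cons, V.nat]
      congr 2
      funext o
      cases o <;> rfl
  tree g x e t := by
    cases x with
    | nil => exact ⟨_, rfl⟩
    | cons e' x =>
      simp only [pvEv, List.cons_append]
      obtain ⟨s, hs⟩ := V.tree (fun o => Option.elim o e' g) x e t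
      exact ⟨s, by rw [hs]⟩

/-- prepend a constant -/
def consMap (a : C) (V : SMap (Option C)) (φ : SMap C) : SMap C where
  ev g x := g a :: V.ev (fun o => o.elim (g a) g) (φ.ev g x)
  nat f g x := by
    simp only [List.map_cons, V.nat, φ.nat]
    congr 2
    funext o
    cases o <;> rfl
  tree g x e t := by
    obtain ⟨s, hs⟩ := φ.tree g x e t
    rw [hs]
    obtain ⟨s', hs'⟩ := V.tree (fun o => Option.elim o (g a) g) (φ.ev g x) e s
    exact ⟨s', by rw [hs']; rfl⟩

/-- evaluation for `seg` -/
def segEv (c : List C) (w : List (Option C)) (y : List C) (ψ : SMap C) {β : Type} (g : C → β) :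
    List β → List β
  | [] => c.map g
  | e :: t => c.map g ++ e :: (w.map (fun o => o.elim e g) ++ (y.map g ++ ψ.ev g t))

/-- a first line, then a fixed word, then a subspace -/
def seg (c : List C) (w : List (Option C)) (y : List C) (ψ : SMap C) : SMap C where
  ev g x := segEv c w y ψ g x
  nat f g x := by
    cases x with
    | nil => simp [segEv]
    | cons e t =>
      simp only [segEv, List.map_append, List.map_cons, List.map_map, ψ.nat]
      congr 3
      apply List.map_congr_left
      intro o _
      cases o <;> rfl
  tree g x e t := by
    cases x with
    | nil => exact ⟨_, rfl⟩
    | cons e' x =>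
      simp only [segEv, List.cons_append]
      obtain ⟨s, hs⟩ := ψ.tree g x e t
      exact ⟨s, by rw [hs]; simp⟩

end SMap

/-! ### Block maps -/

/-- evaluation of a block list -/
def evW {β : Type} : List (List β × List β) → List β → List β
  | [], x => x
  | (u, _) :: _, [] => u
  | (u, v) :: W, e :: t => u ++ e :: (v ++ evW W t)

/-- apply a letter map to a block list -/
def mW {β γ : Type} (f : β → γ) (W : List (List β × List β)) : List (List γ × List γ) :=
  W.map (fun p => (p.1.map f, p.2.map f))

theorem evW_map {β γ : Type} (f : β → γ) (W : List (List β × List β)) (x : List β) :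
    (evW W x).map f = evW (mW f W) (x.map f) := by
  induction W generalizing x with
  | nil => rfl
  | cons p W ih =>
    obtain ⟨u, v⟩ := p
    cases x with
    | nil => rfl
    | cons e t =>
      show (u ++ e :: (v ++ evW W t)).map f = u.map f ++ f e :: (v.map f ++ evW (mW f W) (t.map f))
      rw [← ih]
      simp

theorem evW_tree {β : Type} (W : List (List β × List β)) (x : List β) (e : β) (t : List β) :
    ∃ s, evW W (x ++ e :: t) = evW W x ++ e :: s := by
  induction W generalizing x with
  | nil => exact ⟨t, rfl⟩
  | cons p W ih =>
    obtain ⟨u, v⟩ := p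
    cases x with
    | nil => exact ⟨_, rfl⟩
    | cons e' x =>
      obtain ⟨s, hs⟩ := ih x
      refine ⟨s, ?_⟩
      simp only [List.cons_append, evW, hs]
      simp

/-- block map as a semantic map -/
def smW {C : Type} (W : List (List C × List C)) : SMap C where
  ev g x := evW (mW g W) x
  nat f g x := by
    rw [evW_map]
    simp [mW, Function.comp_def]
  tree g x e t := evW_tree _ x e t

theorem mW_id {β : Type} (W : List (List β × List β)) : mW id W = W := by
  simp [mW]

theorem smW_id {C : Type} (W : List (List C × List C)) (x : List C) :
    (smW W).ev id x = evW W x := by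
  show evW (mW id W) x = _
  rw [mW_id]

/-- the subtree above a word -/
def shiftMap {C : Type} (y : List C) : SMap C where
  ev g x := y.map g ++ x
  nat f g x := by simp
  tree g x e t := ⟨t, by simp⟩

theorem HasLine.shift {α : Type} {A : Set (List α)} (y : List α)
    (h : HasLine {t | y ++ t ∈ A}) : HasLine A := by
  apply (shiftMap y).pullback
  simpa [shiftMap] using h

/-! ### Random blocks -/

section blocks

variable {β : Type} [Fintype β]

/-- sum over splits of a random word of length `R` at a letter -/
noncomputable def SS : ℕ → (List β → List β → ℝ) → ℝ
  | 0, _ => 0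
  | R + 1, F => avg R (fun v => F [] v) + la (fun e => SS R (fun u v => F (e :: u) v))

theorem SS_comm {X : Type} {S : Set X} {T : (X → ℝ) → ℝ} (h : IsAv S T) (R : ℕ)
    (F : List β → List β → X → ℝ) :
    SS R (fun u v => T (F u v)) = T (fun w => SS R (fun u v => F u v w)) := by
  induction R generalizing F with
  | zero => exact (h.const 0).symm
  | succ R ih =>
    simp only [SS]
    rw [h.add, avg_comm h, ← la_comm h]
    congr 2
    funext e
    exact ih _

variable [Nonempty β]

theorem SS_add (R : ℕ) (F G : List β → List β → ℝ) :
    SS R (fun u v => F u v + G u v) = SS R F + SS R G := by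
  induction R generalizing F G with
  | zero => simp [SS]
  | succ R ih =>
    simp only [SS]
    rw [(avg_isAv R).add]
    simp only [ih]
    rw [la_isAv.add]
    ring

theorem SS_smul (R : ℕ) (c : ℝ) (F : List β → List β → ℝ) :
    SS R (fun u v => c * F u v) = c * SS R F := by
  induction R generalizing F with
  | zero => simp [SS]
  | succ R ih =>
    simp only [SS]
    rw [(avg_isAv R).smul]
    simp only [ih]
    rw [la_isAv.smul]
    ring

theorem SS_mono (R : ℕ) (F G : List β → List β → ℝ)
    (h : ∀ u v, u.length + 1 + v.length = R → F u v ≤ G u v) : SS R F ≤ SS R G := by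
  induction R generalizing F G with
  | zero => simp [SS]
  | succ R ih =>
    simp only [SS]
    apply add_le_add
    · exact (avg_isAv R).mono _ _ fun v hv => h _ _ (by simp at hv; simp; omega)
    · exact la_isAv.mono _ _ fun e _ => ih _ _ fun u v huv => h _ _ (by simp; omega)

theorem SS_const (R : ℕ) (c : ℝ) : SS R (fun (_ _ : List β) => c) = R * c := by
  induction R with
  | zero => simp [SS]
  | succ R ih =>
    simp only [SS, ih]
    rw [(avg_isAv R).const, la_isAv.const]
    push_cast
    ring

theorem OB_isAv (R : ℕ) (hR : 1 ≤ R) :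
    IsAv {p : List β × List β | p.1.length + 1 + p.2.length = R}
      (fun F => SS R (fun u v => F (u, v)) / (R : ℝ)) where
  add f g := by
    rw [SS_add, add_div]
  smul c f := by
    rw [SS_smul, mul_div_assoc]
  mono f g h := by
    have := SS_mono R (fun u v => f (u, v)) (fun u v => g (u, v)) fun u v huv => h (u, v) huv
    gcongr
  const c := by
    have : (R : ℝ) ≠ 0 := by exact_mod_cast (by omega : R ≠ 0)
    rw [SS_const]
    field_simp

theorem SS_fst (R : ℕ) (f : List β → ℝ) :
    SS R (fun u _ => f u) = ∑ ℓ ∈ range R, avg ℓ f := by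
  induction R generalizing f with
  | zero => simp [SS]
  | succ R ih =>
    simp only [SS, ih]
    rw [(avg_isAv R).const, Finset.sum_range_succ', la_isAv.sum, add_comm]
    rfl

theorem SS_glue (R : ℕ) (F : List β → ℝ) :
    la (fun e => SS R (fun u v => F (u ++ e :: v))) = R * avg R F := by
  induction R generalizing F with
  | zero =>
    simp only [SS]
    rw [la_isAv.const]
    simp
  | succ R ih =>
    simp only [SS]
    rw [la_isAv.add, la_comm la_isAv]
    have : ∀ e', la (fun e => SS R (fun u v => F ((e' :: u) ++ e :: v))) =
        R * avg R (fun x => F (e' :: x)) := fun e' => ih (fun x => F (e' :: x))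
    simp only [this]
    rw [la_isAv.smul]
    simp only [avg_succ, List.nil_append]
    push_cast
    ring

/-- average over `s` independent random blocks -/
noncomputable def EW (R : ℕ) : ℕ → (List (List β × List β) → ℝ) → ℝ
  | 0, F => F []
  | s + 1, F => SS R (fun u v => EW R s (fun W => F ((u, v) :: W))) / (R : ℝ)

theorem EW_succ (R s : ℕ) (F : List (List β × List β) → ℝ) :
    EW R (s + 1) F = SS R (fun u v => EW R s (fun W => F ((u, v) :: W))) / (R : ℝ) := rfl

theorem EW_isAv (R : ℕ) (hR : 1 ≤ R) (s : ℕ) :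
    IsAv {W : List (List β × List β) | W.length = s} (EW (β := β) R s) := by
  induction s with
  | zero => exact (IsAv.pure []).weaken (by intro x hx; simp_all)
  | succ s ih =>
    exact (OB_isAv R hR).bind (fun _ => ih) (fun p W => p :: W) _
      (by intro e _ x hx; simp_all)

theorem EW_comm {X : Type} {S : Set X} {T : (X → ℝ) → ℝ} (h : IsAv S T) (R s : ℕ)
    (F : List (List β × List β) → X → ℝ) :
    EW R s (fun W => T (F W)) = T (fun w => EW R s (fun W => F W w)) := by
  induction s generalizing F with
  | zero => rfl
  | succ s ih =>
    simp only [EW_succ]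
    rw [h.div_const, ← SS_comm h]
    congr 2
    funext u v
    exact ih _

theorem EW_level (R : ℕ) (hR : 1 ≤ R) (s i : ℕ) (hi : i < s) (f : List β → ℝ) :
    avg i (fun t => EW R s (fun W => f (evW W t))) =
      avg (i * R) (fun x => D R (fun y => f (x ++ y))) := by
  induction i generalizing s f with
  | zero =>
    obtain ⟨s, rfl⟩ := Nat.exists_eq_succ_of_ne_zero (by omega : s ≠ 0)
    simp only [Nat.zero_mul, avg_zero, List.nil_append, EW_succ, evW]
    simp only [(EW_isAv R hR s).const]
    rw [SS_fst]
    rfl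
  | succ i ih =>
    obtain ⟨s, rfl⟩ := Nat.exists_eq_succ_of_ne_zero (by omega : s ≠ 0)
    have hR0 : (R : ℝ) ≠ 0 := by exact_mod_cast (by omega : R ≠ 0)
    simp only [avg_succ, EW_succ, evW]
    have h1 : ∀ e, avg i (fun t => SS R (fun u v => EW R s
        (fun W => f (u ++ e :: (v ++ evW W t)))) / (R : ℝ)) =
        SS R (fun u v => avg (i * R) (fun x => D R (fun y => f ((u ++ e :: v) ++ (x ++ y)))))
          / (R : ℝ) := by
      intro e
      rw [(avg_isAv i).div_const, ← SS_comm (avg_isAv i)]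
      congr 2
      funext u v
      have := ih s (by omega) (fun z => f ((u ++ e :: v) ++ z))
      rw [← this]
      simp
    simp only [h1]
    rw [la_isAv.div_const, SS_glue R (fun z => avg (i * R) (fun x => D R (fun y => f (z ++ (x ++ y))))),
      mul_div_cancel_left₀ _ hR0, Nat.succ_mul, add_comm (i * R), avg_append]
    simp

theorem EW_D (R : ℕ) (hR : 1 ≤ R) (s : ℕ) (f : List β → ℝ) :
    EW R s (fun W => D s (fun t => f (evW W t))) = D (s * R) f := by
  rw [← D_comm (EW_isAv R hR s), D_block]
  unfold D
  congr 1
  apply Finset.sum_congr rfl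
  intro i hi
  exact EW_level R hR s i (by simpa using hi) f

end blocks

/-! ### Influence -/

section influence

variable {β γ : Type} [Fintype β] [Nonempty β] (π : β → γ) (e1 e2 : β)

/-- sign of a letter -/
noncomputable def sg (e : β) : ℝ := ind (e = e1) - ind (e = e2)

theorem sum_sg (h : β → ℝ) : ∑ e, h e * sg e1 e2 e = h e1 - h e2 := by
  classical
  simp [sg, ind, mul_sub, Finset.sum_sub_distrib]

theorem sg_sq_le (e : β) : sg e1 e2 e ^ 2 ≤ 1 := by
  unfold sg ind
  split_ifs <;> norm_num

/-- the correlating function -/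
noncomputable def Sg : (List γ → List γ → ℝ) → List β → ℝ
  | _, [] => 0
  | ε, e :: x => ε [] (x.map π) * sg e1 e2 e + Sg (fun p q => ε (π e :: p) q) x

theorem SS_link (R : ℕ) (ε : List γ → List γ → ℝ) (g : List β → ℝ) :
    SS R (fun u v => ε (u.map π) (v.map π) * (g (u ++ e1 :: v) - g (u ++ e2 :: v))) =
      (Fintype.card β : ℝ) * avg R (fun x => g x * Sg π e1 e2 ε x) := by
  have hc : (0:ℝ) < Fintype.card β := by exact_mod_cast Fintype.card_pos
  induction R generalizing ε g with
  | zero => simp [SS, Sg]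
  | succ R ih =>
    simp only [SS, avg_succ, Sg, List.map_cons, List.cons_append, List.nil_append, List.map_nil]
    have h1 : ∀ e, SS R (fun u v => ε (π e :: u.map π) (v.map π) *
        (g (e :: (u ++ e1 :: v)) - g (e :: (u ++ e2 :: v)))) =
        (Fintype.card β : ℝ) * avg R (fun x => g (e :: x) *
          Sg π e1 e2 (fun p q => ε (π e :: p) q) x) := fun e =>
        ih (fun p q => ε (π e :: p) q) (fun x => g (e :: x))
    simp only [h1]
    rw [la_isAv.smul]
    simp only [mul_add]
    have h2 : ∀ e, avg R (fun x => g (e :: x) * (ε [] (x.map π) * sg e1 e2 e) +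
        g (e :: x) * Sg π e1 e2 (fun p q => ε (π e :: p) q) x) =
        avg R (fun x => ε [] (x.map π) * g (e :: x)) * sg e1 e2 e +
        avg R (fun x => g (e :: x) * Sg π e1 e2 (fun p q => ε (π e :: p) q) x) := by
      intro e
      rw [(avg_isAv R).add, ← (avg_isAv R).mul_const]
      congr 2
      funext x
      ring
    simp only [h2]
    rw [la_isAv.add, mul_add]
    congr 1
    unfold la
    rw [sum_sg, mul_div_cancel₀ _ hc.ne', ← (avg_isAv R).sub]
    congr 1
    funext x
    ring

theorem Sg_sq (hπ : π e1 = π e2) (R : ℕ) (ε : List γ → List γ → ℝ) (hε : ∀ p q, |ε p q| ≤ 1) :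
    avg R (fun x => Sg π e1 e2 ε x ^ 2) ≤ R := by
  induction R generalizing ε with
  | zero => simp [Sg]
  | succ R ih =>
    simp only [avg_succ, Sg]
    have h1 : ∀ e, avg R (fun x => (ε [] (x.map π) * sg e1 e2 e +
        Sg π e1 e2 (fun p q => ε (π e :: p) q) x) ^ 2) ≤
        ((R : ℝ) + 1) + avg R (fun x => 2 * (ε [] (x.map π) *
          Sg π e1 e2 (fun p q => ε (π e :: p) q) x)) * sg e1 e2 e := by
      intro e
      have h2 := ih (fun p q => ε (π e :: p) q) (fun p q => hε _ _)
      have h3 : avg R (fun x => (ε [] (x.map π) * sg e1 e2 e +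
        Sg π e1 e2 (fun p q => ε (π e :: p) q) x) ^ 2) ≤
        avg R (fun x => (Sg π e1 e2 (fun p q => ε (π e :: p) q) x ^ 2 + 1) + (2 * (ε [] (x.map π) *
          Sg π e1 e2 (fun p q => ε (π e :: p) q) x)) * sg e1 e2 e) := by
        apply (avg_isAv R).mono
        intro x _
        have h4 : ε [] (x.map π) ^ 2 ≤ 1 := by
          rw [← sq_abs]
          have := hε [] (x.map π)
          have := abs_nonneg (ε [] (x.map π))
          nlinarith
        have h5 := sg_sq_le e1 e2 e
        have h6 : ε [] (x.map π) ^ 2 * sg e1 e2 e ^ 2 ≤ 1 :=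
          mul_le_one₀ h4 (sq_nonneg _) h5
        nlinarith
      rw [(avg_isAv R).add, (avg_isAv R).add, (avg_isAv R).const, (avg_isAv R).mul_const] at h3
      linarith
    have h4 := la_isAv.mono _ _ fun e (_ : e ∈ Set.univ) => h1 e
    rw [la_isAv.add, la_isAv.const] at h4
    have h5 : la (fun e => avg R (fun x => 2 * (ε [] (x.map π) *
          Sg π e1 e2 (fun p q => ε (π e :: p) q) x)) * sg e1 e2 e) = 0 := by
      unfold la
      rw [sum_sg, hπ]
      simp
    rw [h5] at h4
    push_cast
    linarith

theorem SS_inf (hπ : π e1 = π e2) (R : ℕ) (hR : 1 ≤ R) (ε : List γ → List γ → ℝ)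
    (hε : ∀ p q, |ε p q| ≤ 1) (B : ℝ) (hB : 0 ≤ B) (g : List β → ℝ) (hg : ∀ x, |g x| ≤ B) :
    |SS R (fun u v => ε (u.map π) (v.map π) * (g (u ++ e1 :: v) - g (u ++ e2 :: v)))| ≤
      Fintype.card β * (B * √R) := by
  have hR0 : (0 : ℝ) < R := by exact_mod_cast (by omega : 0 < R)
  have hs : 0 < √(R:ℝ) := Real.sqrt_pos.mpr hR0
  rw [SS_link, abs_mul, abs_of_nonneg (by positivity : (0:ℝ) ≤ Fintype.card β)]
  gcongr
  have h1 := (avg_isAv R).abs_le (fun x => g x * Sg π e1 e2 ε x)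
    (fun x => B * ((Sg π e1 e2 ε x ^ 2 / √R + √R) / 2)) (by
      intro x _
      rw [abs_mul]
      have h2 : |Sg π e1 e2 ε x| ≤ (Sg π e1 e2 ε x ^ 2 / √R + √R) / 2 := by
        rw [← sq_abs]
        have h3 : |Sg π e1 e2 ε x| ^ 2 / √R = |Sg π e1 e2 ε x| ^ 2 / √R := rfl
        have h4 : 0 ≤ (|Sg π e1 e2 ε x| - √R) ^ 2 / √R := by positivity
        have h5 : (|Sg π e1 e2 ε x| - √R) ^ 2 / √R =
          |Sg π e1 e2 ε x| ^ 2 / √R - 2 * |Sg π e1 e2 ε x| + √R := by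
          field_simp
          ring
        linarith
      exact mul_le_mul (hg x) h2 (abs_nonneg _) hB)
  refine h1.trans ?_
  rw [(avg_isAv R).smul, (avg_isAv R).div_const, (avg_isAv R).add, (avg_isAv R).const,
    (avg_isAv R).div_const]
  have h2 := Sg_sq π e1 e2 hπ R ε hε
  have h3 : avg R (fun x => Sg π e1 e2 ε x ^ 2) / √R ≤ √R := by
    rw [div_le_iff₀ hs, Real.mul_self_sqrt hR0.le]
    exact h2
  gcongr
  linarith

theorem EW_inf (R : ℕ) (hR : 1 ≤ R) (B : ℝ) (hB : 0 ≤ B) (s : ℕ)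
    (ε : List (List γ × List γ) → ℝ) (hε : ∀ W, |ε W| ≤ 1) (f : List β → ℝ)
    (hf : ∀ x, |f x| ≤ B) (t1 t2 : List β) (ht : t1.map π = t2.map π) (hs : t1.length < s) :
    |EW R s (fun W => ε (mW π W) * (f (evW W t1) - f (evW W t2)))| ≤
      t1.length * (Fintype.card β * (B * √R) / R) := by
  have hR0 : (0 : ℝ) < R := by exact_mod_cast (by omega : 0 < R)
  induction t1 generalizing s t2 ε f with
  | nil =>
    have : t2 = [] := by simpa using ht.symm
    subst this
    simp [(EW_isAv R hR s).const]
  | cons a t1 ih =>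
    cases t2 with
    | nil => simp at ht
    | cons b t2 =>
      simp only [List.map_cons, List.cons.injEq] at ht
      obtain ⟨s, rfl⟩ := Nat.exists_eq_succ_of_ne_zero (by omega : s ≠ 0)
      have hs' : t1.length < s := by simpa using hs
      set κ := Fintype.card β * (B * √R) / R with hκ
      have hκ0 : 0 ≤ κ := by positivity
      have e1 : EW R (s + 1) (fun W => ε (mW π W) * (f (evW W (a :: t1)) - f (evW W (b :: t2)))) =
        EW R (s + 1) (fun W => ε (mW π W) * (f (evW W (a :: t1)) - f (evW W (a :: t2)))) +
        EW R (s + 1) (fun W => ε (mW π W) * (f (evW W (a :: t2)) - f (evW W (b :: t2)))) := by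
        rw [← (EW_isAv R hR (s + 1)).add]
        congr 1
        funext W
        ring
      have b1 : |EW R (s + 1) (fun W => ε (mW π W) *
          (f (evW W (a :: t1)) - f (evW W (a :: t2))))| ≤ t1.length * κ := by
        have h1 := (OB_isAv (β := β) R hR).abs_le (fun p => EW R s (fun W =>
          ε (mW π (p :: W)) * (f (evW (p :: W) (a :: t1)) - f (evW (p :: W) (a :: t2)))))
          (fun _ => t1.length * κ) (by
            rintro ⟨u, v⟩ _
            exact ih s (fun W => ε ((u.map π, v.map π) :: W)) (fun W => hε _)
              (fun x => f (u ++ a :: (v ++ x))) (fun x => hf _) t2 ht.2 hs')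
        rw [SS_const, mul_div_cancel_left₀ _ hR0.ne'] at h1
        exact h1
      have b2 : |EW R (s + 1) (fun W => ε (mW π W) *
          (f (evW W (a :: t2)) - f (evW W (b :: t2))))| ≤ κ := by
        rw [EW_succ, SS_comm (EW_isAv R hR s), abs_div, abs_of_pos hR0, hκ]
        gcongr
        have h1 := (EW_isAv R hR s).abs_le (fun W : List (List β × List β) => SS R (fun u v =>
          ε (mW π ((u, v) :: W)) * (f (evW ((u, v) :: W) (a :: t2)) -
            f (evW ((u, v) :: W) (b :: t2)))))
          (fun _ => Fintype.card β * (B * √R)) (by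
            intro W _
            have := SS_inf π a b ht.1 R hR (fun p q => ε ((p, q) :: mW π W))
              (fun _ _ => hε _) B hB (fun z => f (z ++ evW W t2)) (fun _ => hf _)
            simpa [evW, mW] using this)
        rw [(EW_isAv R hR s).const] at h1
        exact h1
      rw [e1]
      refine (abs_add_le _ _).trans ?_
      simp only [List.length_cons]
      push_cast
      linarith

end influence

/-! ### Fiber averages -/

section fiber

variable {β γ : Type} [Fintype β] (π : β → γ)

/-- average over a fiber of `π` -/
noncomputable def fib (c : γ) (F : β → ℝ) : ℝ := by
  classical
  exact (∑ e ∈ univ.filter (fun e => π e = c), F e) /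
    ((univ.filter (fun e => π e = c)).card : ℝ)

theorem fib_isAv (hπ : Function.Surjective π) (c : γ) : IsAv {e | π e = c} (fib π c) := by
  classical
  obtain ⟨e, he⟩ := hπ c
  have := IsAv.unif (univ.filter (fun e => π e = c)) ⟨e, by simp [he]⟩
  unfold fib
  simpa using this

theorem la_fib (F : β → ℝ) : la F = la (fun e => fib π (π e) F) := by
  classical
  unfold la
  congr 1
  have h1 : ∀ e, fib π (π e) F = ∑ e' : β, if π e' = π e then
      F e' / ((univ.filter (fun e => π e = π e')).card : ℝ) else 0 := by
    intro e
    unfold fib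
    rw [Finset.sum_div, Finset.sum_filter]
    apply Finset.sum_congr rfl
    intro e' _
    by_cases h : π e' = π e
    · simp [h]
    · simp [h]
  simp only [h1]
  rw [Finset.sum_comm]
  apply Finset.sum_congr rfl
  intro e' _
  rw [← Finset.sum_filter, Finset.sum_const]
  have h2 : (univ.filter (fun e => π e' = π e)) = univ.filter (fun e => π e = π e') := by
    ext e
    simp [eq_comm]
  have h3 : ((univ.filter (fun e => π e = π e')).card : ℝ) ≠ 0 := by
    have : 0 < (univ.filter (fun e => π e = π e')).card := Finset.card_pos.mpr ⟨e', by simp⟩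
    exact_mod_cast this.ne'
  rw [h2, nsmul_eq_mul]
  field_simp

/-- fiber average on words -/
noncomputable def Lf : List γ → (List β → ℝ) → ℝ
  | [], f => f []
  | c :: w, f => fib π c (fun e => Lf w (fun x => f (e :: x)))

theorem Lf_isAv (hπ : Function.Surjective π) (w : List γ) :
    IsAv {x | x.map π = w} (Lf π w) := by
  induction w with
  | nil => exact (IsAv.pure []).weaken (by intro x hx; simp_all)
  | cons c w ih =>
    exact (fib_isAv π hπ c).bind (fun _ => ih) (fun e x => e :: x) _
      (by intro e he x hx; simp_all)

variable [Nonempty β]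

theorem avg_Lf (hπ : Function.Surjective π) (n : ℕ) (f : List β → ℝ) :
    avg n f = avg n (fun u => Lf π (u.map π) f) := by
  induction n generalizing f with
  | zero => rfl
  | succ n ih =>
    rw [avg_succ, la_fib π, avg_succ]
    congr 1
    funext e
    simp only [List.map_cons, Lf]
    rw [avg_comm (fib_isAv π hπ (π e))]
    congr 1
    funext e'
    exact ih _

theorem SS_Lf (hπ : Function.Surjective π) (R : ℕ) (F : List β → List β → ℝ) :
    SS R F = SS R (fun u v => Lf π (u.map π) (fun u' => Lf π (v.map π) (fun v' => F u' v'))) := by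
  induction R generalizing F with
  | zero => rfl
  | succ R ih =>
    simp only [SS]
    rw [avg_Lf π hπ R (fun v => F [] v), la_fib π]
    congr 2
    funext e
    simp only [List.map_cons, Lf]
    rw [SS_comm (fib_isAv π hπ (π e))]
    congr 1
    funext e'
    exact ih _

/-- fiber average on block lists -/
noncomputable def LfW : List (List γ × List γ) → (List (List β × List β) → ℝ) → ℝ
  | [], F => F []
  | (u, v) :: W, F => Lf π u (fun u' => Lf π v (fun v' => LfW W (fun W' => F ((u', v') :: W'))))

theorem LfW_isAv (hπ : Function.Surjective π) (W : List (List γ × List γ)) :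
    IsAv {x | mW π x = W} (LfW π W) := by
  induction W with
  | nil => exact (IsAv.pure []).weaken (by intro x hx; simp_all [mW])
  | cons p W ih =>
    obtain ⟨u, v⟩ := p
    have h1 : IsAv {q : List β × List (List β × List β) | q.1.map π = v ∧ mW π q.2 = W}
      (fun F => Lf π v (fun v' => LfW π W (fun W' => F (v', W')))) :=
      (Lf_isAv π hπ v).bind (fun _ => ih) (fun v' W' => (v', W')) _
        (by intro e he x hx; exact ⟨he, hx⟩)
    exact (Lf_isAv π hπ u).bind (fun _ => h1) (fun u' q => (u', q.1) :: q.2) _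
      (by
        intro e he x hx
        simp only [mW, Set.mem_ofPred_eq, List.map_cons] at he hx ⊢
        rw [he, hx.1, hx.2])

theorem EW_LfW (hπ : Function.Surjective π) (R s : ℕ) (F : List (List β × List β) → ℝ) :
    EW R s F = EW R s (fun W => LfW π (mW π W) F) := by
  induction s generalizing F with
  | zero => rfl
  | succ s ih =>
    rw [EW_succ, SS_Lf π hπ, EW_succ]
    congr 2
    funext u v
    show _ = EW R s (fun W => Lf π (u.map π) (fun u' => Lf π (v.map π) (fun v' =>
      LfW π (mW π W) (fun W' => F ((u', v') :: W')))))
    rw [EW_comm (Lf_isAv π hπ _)]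
    congr 1
    funext u'
    rw [EW_comm (Lf_isAv π hπ _)]
    congr 1
    funext v'
    exact ih _

/-- `L¹` influence bound for fiber averages. -/
theorem EW_abs_inf (hπ : Function.Surjective π) (R : ℕ) (hR : 1 ≤ R) (B : ℝ) (hB : 0 ≤ B) (s : ℕ)
    (f : List β → ℝ) (hf : ∀ x, |f x| ≤ B) (t1 t2 : List β) (ht : t1.map π = t2.map π)
    (hs : t1.length < s) :
    EW R s (fun W => |LfW π (mW π W) (fun W' => f (evW W' t1) - f (evW W' t2))|) ≤
      t1.length * (Fintype.card β * (B * √R) / R) := by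
  classical
  set ε : List (List γ × List γ) → ℝ := fun V =>
    if 0 ≤ LfW π V (fun W' => f (evW W' t1) - f (evW W' t2)) then 1 else -1 with hεd
  have hε : ∀ V, |ε V| ≤ 1 := by
    intro V
    simp only [hεd]
    split_ifs <;> simp
  have h1 := EW_inf π R hR B hB s ε hε f hf t1 t2 ht hs
  rw [EW_LfW π hπ] at h1
  refine le_trans (le_of_eq ?_) ((le_abs_self _).trans h1)
  congr 1
  funext W
  have h2 : LfW π (mW π W) (fun W' => ε (mW π W') * (f (evW W' t1) - f (evW W' t2))) =
      ε (mW π W) * LfW π (mW π W) (fun W' => f (evW W' t1) - f (evW W' t2)) := by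
    rw [← (LfW_isAv π hπ (mW π W)).smul]
    apply (LfW_isAv π hπ (mW π W)).congr
    intro W' hW'
    have : mW π W' = mW π W := hW'
    rw [this]
  rw [h2]
  simp only [hεd]
  split_ifs with h
  · rw [abs_of_nonneg h, one_mul]
  · rw [abs_of_neg (not_le.mp h)]
    ring

end fiber

/-! ### Blocks with prescribed levels -/

section levels

variable {β : Type}

/-- block lists with prescribed levels -/
def LevZ : ℕ → List ℕ → List (List β × List β) → Prop
  | _, [], Z => Z = []
  | p, ℓ :: ls, Z => ∃ z Z', Z = (z, []) :: Z' ∧ z.length = ℓ - p ∧ LevZ (ℓ + 1) ls Z'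

theorem LevZ_length (p : ℕ) (ls : List ℕ) (Z : List (List β × List β)) (h : LevZ p ls Z)
    (hp : ∀ ℓ ∈ ls, p ≤ ℓ) (hs : ls.Pairwise (· < ·)) (t : List β) (ht : t.length < ls.length) :
    (evW Z t).length + p ∈ ls := by
  induction ls generalizing p Z t with
  | nil => simp at ht
  | cons ℓ ls ih =>
    obtain ⟨z, Z', rfl, hz, hZ'⟩ := h
    rw [List.pairwise_cons] at hs
    have hpl : p ≤ ℓ := hp ℓ (by simp)
    cases t with
    | nil =>
      simp only [evW, hz]
      rw [Nat.sub_add_cancel hpl]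
      simp
    | cons e t =>
      have h1 := ih (ℓ + 1) Z' hZ' (fun ℓ' h' => hs.1 ℓ' h') hs.2 t (by simpa using ht)
      simp only [evW, List.length_append, List.length_cons, hz, List.nil_append]
      apply List.mem_cons_of_mem
      convert h1 using 1
      omega

variable [Fintype β]

/-- average over block lists with prescribed levels -/
noncomputable def EZ : ℕ → List ℕ → (List (List β × List β) → ℝ) → ℝ
  | _, [], F => F []
  | p, ℓ :: ls, F => avg (ℓ - p) (fun z => EZ (ℓ + 1) ls (fun Z => F ((z, []) :: Z)))

variable [Nonempty β]

theorem EZ_isAv (p : ℕ) (ls : List ℕ) :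
    IsAv {Z : List (List β × List β) | LevZ p ls Z} (EZ (β := β) p ls) := by
  induction ls generalizing p with
  | nil => exact (IsAv.pure []).weaken (by intro x hx; simpa [LevZ] using hx)
  | cons ℓ ls ih =>
    exact (avg_isAv (ℓ - p)).bind (fun _ => ih (ℓ + 1)) (fun z Z => (z, []) :: Z) _
      (by intro z hz Z hZ; exact ⟨z, Z, rfl, hz, hZ⟩)

theorem EZ_sum (p : ℕ) (ls : List ℕ) (hp : ∀ ℓ ∈ ls, p ≤ ℓ) (hs : ls.Pairwise (· < ·))
    (f : List β → ℝ) :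
    ∑ i ∈ range ls.length, avg i (fun t => EZ p ls (fun Z => f (evW Z t))) =
      (ls.map (fun ℓ => avg (ℓ - p) f)).sum := by
  induction ls generalizing p f with
  | nil => simp
  | cons ℓ ls ih =>
    rw [List.pairwise_cons] at hs
    have hpl : p ≤ ℓ := hp ℓ (by simp)
    rw [List.length_cons, Finset.sum_range_succ', List.map_cons, List.sum_cons, add_comm]
    congr 1
    · simp only [avg_zero, EZ, evW, (EZ_isAv _ _).const]
    · have h1 : ∀ i, avg (i + 1) (fun t => EZ p (ℓ :: ls) (fun Z => f (evW Z t))) =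
          la (fun e => avg (ℓ - p) (fun z => avg i (fun t =>
            EZ (ℓ + 1) ls (fun Z => f (z ++ e :: evW Z t))))) := by
        intro i
        rw [avg_succ]
        congr 1
        funext e
        rw [avg_comm (avg_isAv i)]
        rfl
      simp only [h1]
      rw [← la_isAv.sum]
      simp only [← (avg_isAv _).sum]
      have h2 : ∀ e z, ∑ i ∈ range ls.length, avg i (fun t =>
            EZ (ℓ + 1) ls (fun Z => f (z ++ e :: evW Z t))) =
            (ls.map (fun ℓ' => avg (ℓ' - (ℓ + 1)) (fun x => f (z ++ e :: x)))).sum := by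
        intro e z
        exact ih (ℓ + 1) (fun ℓ' h' => hs.1 ℓ' h') hs.2 (fun x => f (z ++ e :: x))
      simp only [h2]
      rw [la_comm (avg_isAv _)]
      have h3 : ∀ ls' : List ℕ, (∀ ℓ' ∈ ls', ℓ < ℓ') →
          avg (ℓ - p) (fun z => la (fun e => (ls'.map (fun ℓ' =>
            avg (ℓ' - (ℓ + 1)) (fun x => f (z ++ e :: x)))).sum)) =
          (ls'.map (fun ℓ => avg (ℓ - p) f)).sum := by
        intro ls' hls'
        induction ls' with
        | nil => simp [la_isAv.const, (avg_isAv _).const]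
        | cons a ls' ih' =>
          simp only [List.map_cons, List.sum_cons]
          rw [← ih' (fun b hb => hls' b (by simp [hb]))]
          have ha := hls' a (by simp)
          have : a - p = (ℓ - p) + ((a - (ℓ + 1)) + 1) := by omega
          rw [this, avg_append, ← (avg_isAv _).add]
          congr 1
          funext z
          rw [la_isAv.add, avg_succ]
      exact h3 ls hs.1

end levels

/-! ### Hales–Jewett consequences -/

theorem split_none {α : Type} (x : List (Option α)) (h : none ∈ x) :
    ∃ (u : List α) (w : List (Option α)), x = u.map some ++ none :: w := by
  induction x with
  | nil => simp at h
  | cons o x ih =>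
    cases o with
    | none => exact ⟨[], x, rfl⟩
    | some a =>
      obtain ⟨u, w, hu⟩ := ih (by simpa using h)
      exact ⟨a :: u, w, by simp [hu]⟩

theorem map_getD_some {α : Type} (u : List α) (a : α) :
    (u.map some).map (fun o => Option.getD o a) = u := by
  rw [List.map_map]
  exact List.map_id u

theorem list_HJ (β κ : Type) [Finite β] [Finite κ] :
    ∃ n, ∀ χ : List β → κ, ∃ (u : List β) (w : List (Option β)), u.length + 1 + w.length = n ∧
      ∀ a b, χ (u ++ a :: w.map (fun o => o.getD a)) = χ (u ++ b :: w.map (fun o => o.getD b)) := by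
  obtain ⟨ι, hι, H⟩ := Combinatorics.Line.exists_mono_in_high_dimension β κ
  refine ⟨Fintype.card ι, fun χ => ?_⟩
  let e := Fintype.equivFin ι
  obtain ⟨l, c, hl⟩ := H (fun x => χ (List.ofFn (fun i => x (e.symm i))))
  obtain ⟨i, hi⟩ := l.proper
  obtain ⟨u, w, huw⟩ := split_none (List.ofFn (fun i => l.idxFun (e.symm i)))
    (List.mem_ofFn.mpr ⟨e i, by simp [hi]⟩)
  have h1 : ∀ a, u ++ a :: w.map (fun o => o.getD a) = List.ofFn (fun i => l a (e.symm i)) := by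
    intro a
    have h2 := congrArg (List.map (fun o => Option.getD o a)) huw
    rw [List.map_ofFn, List.map_append, map_getD_some] at h2
    exact h2.symm
  refine ⟨u, w, ?_, fun a b => ?_⟩
  · have h2 := congrArg List.length huw
    simp at h2
    omega
  · rw [h1, h1]
    exact (hl a).trans (hl b).symm

section HJ

variable (β : Type) [Finite β] [Nonempty β]

theorem HL (m : ℕ) (κ : Type) [Finite κ] : ∃ n, ∀ χ : List β → κ, ∃ V : SMap β,
    (∀ t : List β, t.length < m → (V.ev id t).length < n) ∧
    ∀ t t' : List β, t.length < m → t.length = t'.length → χ (V.ev id t) = χ (V.ev id t') := by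
  induction m with
  | zero => exact ⟨0, fun χ => ⟨SMap.idm, fun t ht => absurd ht (by simp),
      fun t _ ht => absurd ht (by simp)⟩⟩
  | succ m ih =>
    obtain ⟨n1, h1⟩ := ih
    have : Finite {z : List β // z.length < n1} := (List.finite_length_lt β n1).to_subtype
    obtain ⟨H, h2⟩ := list_HJ β ({z : List β // z.length < n1} → κ)
    refine ⟨H + n1 + 1, fun χ => ?_⟩
    obtain ⟨u, w, h3, h4⟩ := h2 (fun y z => χ (y ++ z.1))
    let e0 : β := Classical.arbitrary β
    obtain ⟨V, h5, h6⟩ := h1 (fun z => χ (u ++ e0 :: w.map (fun o => o.getD e0) ++ z))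
    have hev : ∀ e t, (SMap.seg u w [] V).ev id (e :: t) =
        (u ++ e :: w.map (fun o => o.getD e)) ++ V.ev id t := by
      intro e t
      show SMap.segEv u w [] V id (e :: t) = _
      have : (fun o : Option β => o.elim e id) = fun o => o.getD e := by
        funext o; cases o <;> rfl
      simp [SMap.segEv, this]
    have hnil : (SMap.seg u w [] V).ev id [] = u := by
      show u.map id = u
      simp
    refine ⟨SMap.seg u w [] V, ?_, ?_⟩
    · intro t ht
      cases t with
      | nil => rw [hnil]; omega
      | cons e t =>
        rw [hev]
        have := h5 t (by simpa using ht)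
        simp
        omega
    · intro t t' ht htt
      cases t with
      | nil =>
        cases t' with
        | nil => rfl
        | cons e' t' => simp at htt
      | cons e t =>
        cases t' with
        | nil => simp at htt
        | cons e' t' =>
          have ht1 : t.length < m := by simpa using ht
          have htt1 : t.length = t'.length := by simpa using htt
          have key : ∀ e (t : List β), t.length < m → χ ((SMap.seg u w [] V).ev id (e :: t)) =
              χ (u ++ e0 :: w.map (fun o => o.getD e0) ++ V.ev id t) := by
            intro e t ht
            rw [hev]
            exact congrFun (h4 e e0) ⟨V.ev id t, h5 t ht⟩
          rw [key e t ht1, key e' t' (htt1 ▸ ht1)]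
          exact h6 t t' ht1 htt1

theorem HM [Fintype β] (m : ℕ) (κ : Type) [Finite κ] : ∃ n, ∀ χ : List β → κ, ∃ V : SMap β,
    (∀ t : List β, t.length < m → (V.ev id t).length < n) ∧
    ∀ t t' : List β, t.length < m → t'.length < m → χ (V.ev id t) = χ (V.ev id t') := by
  classical
  have := Fintype.ofFinite κ
  obtain ⟨n, hn⟩ := HL β (Fintype.card κ * m + 1) κ
  refine ⟨n, fun χ => ?_⟩
  obtain ⟨V, h1, h2⟩ := hn χ
  let e0 : β := Classical.arbitrary β
  let lev : ℕ → κ := fun i => χ (V.ev id (List.replicate i e0))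
  obtain ⟨y, _, hy⟩ := Finset.exists_lt_card_fiber_of_mul_lt_card_of_maps_to
    (s := range (Fintype.card κ * m + 1)) (t := (univ : Finset κ)) (f := lev) (n := m)
    (fun _ _ => mem_univ _) (by simp)
  set S := (range (Fintype.card κ * m + 1)).filter (fun i => lev i = y) with hS
  let ls := S.sort (· ≤ ·)
  have hmem : ∀ ℓ, ℓ ∈ ls ↔ ℓ ∈ S := fun ℓ => Finset.mem_sort _
  have hlen : ls.length = S.card := Finset.length_sort _
  obtain ⟨Z, hZ, _⟩ := (EZ_isAv (β := β) 0 ls).exists_gt (fun _ => 1) 0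
    (by rw [(EZ_isAv (β := β) 0 ls).const]; norm_num)
  have hlev : ∀ t : List β, t.length < m → (evW Z t).length ∈ S := by
    intro t ht
    have := LevZ_length 0 ls Z hZ (fun _ _ => Nat.zero_le _)
      (Finset.sortedLT_sort S).pairwise t (by omega)
    rw [hmem] at this
    simpa using this
  have hc : ∀ t : List β, t.length < m → χ (V.ev id (evW Z t)) = y := by
    intro t ht
    have h3 := hlev t ht
    rw [hS, Finset.mem_filter] at h3
    rw [← h3.2]
    exact h2 _ _ (by simpa using h3.1) (by simp)
  refine ⟨V.comp (smW Z), ?_, ?_⟩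
  · intro t ht
    show (V.ev id ((smW Z).ev id t)).length < n
    rw [smW_id]
    have h3 := hlev t ht
    rw [hS, Finset.mem_filter] at h3
    exact h1 _ (by simpa using h3.1)
  · intro t t' ht ht'
    show χ (V.ev id ((smW Z).ev id t)) = χ (V.ev id ((smW Z).ev id t'))
    rw [smW_id, smW_id, hc t ht, hc t' ht']

end HJ

/-- Ramsey alternative for variable words. -/
theorem RL (α : Type) [Fintype α] (m : ℕ) (M : ℕ) : ∀ (F : Type) [Finite F],
    ∃ n, ∀ G : F → Set (List (Option α)),
      (∃ (f : F) (φ : SMap α), (∀ z, z.length < m → φ.ev some (none :: z) ∈ G f) ∧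
        ∀ x : List (Option α), x.length ≤ m → (φ.ev some x).length < n) ∨
      (∃ φ : SMap α, (∀ f, ∀ x : List (Option α), x.length < M → none ∈ x → φ.ev some x ∉ G f) ∧
        ∀ x : List (Option α), x.length < M → (φ.ev some x).length < n) := by
  induction M with
  | zero => exact fun F _ => ⟨0, fun G => Or.inr ⟨SMap.idm, fun f x hx => absurd hx (by simp),
      fun x hx => absurd hx (by simp)⟩⟩
  | succ M ih =>
    intro F _
    obtain ⟨n', hn'⟩ := ih (F × α)
    obtain ⟨n, hn⟩ := HM (Option α) (max m n' + 1) (F → Prop)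
    refine ⟨n + 2, fun G => ?_⟩
    obtain ⟨V, h1, h2⟩ := hn (fun z f => none :: z ∈ G f)
    have hid : (fun o : Option α => o.elim none some) = id := by
      funext o; cases o <;> rfl
    have hlenV : ∀ (g : Option α → Option α) (t : List (Option α)), t.length < max m n' + 1 →
        (V.ev g t).length < n := by
      intro g t ht
      rw [V.length_eq g id t t rfl]
      exact h1 t ht
    by_cases hc : ∃ f, none :: V.ev id [] ∈ G f
    · obtain ⟨f, hf⟩ := hc
      left
      refine ⟨f, SMap.prepVar V, ?_, ?_⟩
      · intro z hz
        show none :: V.ev (fun o : Option α => o.elim none some) z ∈ G f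
        rw [hid]
        have := congrFun (h2 z [] (by omega) (by simp)) f
        rw [this]
        exact hf
      · intro x hx
        cases x with
        | nil => show 0 < _; omega
        | cons e t =>
          show (e :: V.ev (fun o : Option α => o.elim e some) t).length < _
          have := hlenV (fun o : Option α => o.elim e some) t (by simp at hx; omega)
          simp
          omega
    · push Not at hc
      have hc' : ∀ f, ∀ z : List (Option α), z.length < max m n' + 1 →
          none :: V.ev id z ∉ G f := by
        intro f z hz
        have := congrFun (h2 z [] hz (by simp)) f
        rw [this]
        exact hc f
      rcases hn' (fun fa => {x | some fa.2 :: V.ev (fun o : Option α => o.elim (some fa.2) some) x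
          ∈ G fa.1}) with ⟨⟨f, a⟩, φ, h3, h4⟩ | ⟨φ, h3, h4⟩
      · left
        refine ⟨f, SMap.consMap a V φ, fun z hz => h3 z hz, fun x hx => ?_⟩
        show (some a :: V.ev (fun o : Option α => o.elim (some a) some) (φ.ev some x)).length < _
        have h5 := h4 x hx
        have := hlenV (fun o : Option α => o.elim (some a) some) (φ.ev some x) (by omega)
        simp
        omega
      · right
        have hev : ∀ e t, (SMap.prepVar (V.comp (φ.cmap some))).ev some (e :: t) =
            e :: V.ev (fun o : Option α => o.elim e some) (φ.ev some t) := fun e t => rfl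
        refine ⟨SMap.prepVar (V.comp (φ.cmap some)), ?_, ?_⟩
        · intro f x hx hnx
          cases x with
          | nil => simp at hnx
          | cons e t =>
            rw [hev]
            have ht : t.length < M := by simpa using hx
            cases e with
            | none =>
              rw [hid]
              have := h4 t ht
              exact hc' f _ (by omega)
            | some a =>
              exact h3 (f, a) t ht (by simpa using hnx)
        · intro x hx
          cases x with
          | nil => show 0 < _; omega
          | cons e t =>
            rw [hev]
            have h5 := h4 t (by simpa using hx)
            have := hlenV (fun o : Option α => o.elim e some) (φ.ev some t) (by omega)
            simp
            omega

/-! ### Pairs of levels -/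

theorem SMap.line {C : Type} (φ : SMap C) (c : List C) (w : List (Option C)) :
    ∃ s : List (Option C), ∀ a, φ.ev id (c ++ a :: w.map (fun o => o.getD a)) =
      φ.ev id c ++ a :: s.map (fun o => o.getD a) := by
  obtain ⟨s, hs⟩ := φ.tree some (c.map some) none w
  refine ⟨s, fun a => ?_⟩
  have h4 := congrArg (List.map (fun o => Option.getD o a)) hs
  rw [φ.nat, List.map_append, List.map_append, φ.nat, map_getD_some] at h4
  exact h4

section pair

variable {α : Type} [Fintype α] [Nonempty α]

theorem avg_drop_len (p : List α) (ℓ : ℕ) (h : p.length ≤ ℓ) (g : List α → ℝ) :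
    avg ℓ (fun x => g (x.drop p.length)) = avg (ℓ - p.length) g := by
  have := avg_drop p.length (ℓ - p.length) g
  rwa [Nat.add_sub_cancel' h] at this

theorem avg_take (p q : ℕ) (f : List α → ℝ) :
    avg (p + q) (fun x => f (x.take p)) = avg p f := by
  rw [avg_append]
  apply (avg_isAv p).congr
  intro x hx
  have hx' : x.length = p := hx
  have : ∀ y : List α, (x ++ y).take p = x := by
    intro y
    rw [← hx', List.take_left]
  simp only [this]
  exact (avg_isAv q).const _

theorem pair (hT : TT α) (η : ℝ) (hη : 0 < η) : ∃ (M : ℕ) (θ : ℝ), 1 ≤ M ∧ 0 < θ ∧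
    ∀ L0 L1 : Finset ℕ, L0.card = M → L1.Nonempty → (∀ x ∈ L0, ∀ y ∈ L1, x < y) →
    ∀ A : Set (List α),
    η * M * L1.card ≤ ∑ ℓ ∈ L1, ∑ ℓ0 ∈ L0, avg ℓ0 (fun p => ind (p ∈ A) *
      avg (ℓ - ℓ0) (fun s => ind (p ++ s ∈ A))) →
    ∃ (c : List α) (w : List (Option α)), c ∈ A ∧ (∀ a, c ++ a :: w.map (fun o => o.getD a) ∈ A) ∧
      c.length ∈ L0 ∧ c.length + 1 + w.length ∈ L0 ∧
      θ * L1.card ≤ ∑ ℓ ∈ L1, avg (ℓ - (c.length + 1 + w.length))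
        (fun s => ind (∀ a, c ++ a :: w.map (fun o => o.getD a) ++ s ∈ A)) := by
  classical
  obtain ⟨M, hM, hN⟩ := hT.bounded (η / 4) (by positivity)
  have hfin : Set.Finite ({x : List α | x.length < M} ×ˢ {x : List (Option α) | x.length < M}) :=
    (List.finite_length_lt α M).prod (List.finite_length_lt (Option α) M)
  set Cs := hfin.toFinset with hCs
  refine ⟨M, η / 4 / (Cs.card + 1), hM, by positivity, ?_⟩
  intro L0 L1 hL0 hL1 hlt A hsum
  have hM0 : (0 : ℝ) < M := by exact_mod_cast hM
  have hL1c : (0 : ℝ) < L1.card := by exact_mod_cast hL1.card_pos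
  let ls := L0.sort (· ≤ ·)
  have hmem : ∀ ℓ, ℓ ∈ ls ↔ ℓ ∈ L0 := fun ℓ => Finset.mem_sort _
  have hlen : ls.length = M := (Finset.length_sort _).trans hL0
  have hpw : ls.Pairwise (· < ·) := (Finset.sortedLT_sort L0).pairwise
  let G : List α → List α → ℝ := fun x p => ind (p ∈ A ∧ p ++ x.drop p.length ∈ A)
  let H : List α → ℝ := fun p => ∑ ℓ ∈ L1, avg ℓ (fun x => G x p)
  have h1 : ∀ ℓ0 ∈ L0, avg ℓ0 H = ∑ ℓ ∈ L1, avg ℓ0 (fun p => ind (p ∈ A) *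
      avg (ℓ - ℓ0) (fun s => ind (p ++ s ∈ A))) := by
    intro ℓ0 h0
    rw [(avg_isAv ℓ0).sum]
    apply Finset.sum_congr rfl
    intro ℓ hℓ
    apply (avg_isAv ℓ0).congr
    intro p hp
    have hp' : p.length = ℓ0 := hp
    have hle := hlt ℓ0 h0 ℓ hℓ
    rw [← hp', ← avg_drop_len p ℓ (by omega) (fun s => ind (p ++ s ∈ A)), ← (avg_isAv ℓ).smul]
    congr 1
    funext x
    show ind _ = _
    by_cases hpA : p ∈ A
    · rw [ind_true hpA, one_mul]
      simp [hpA]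
    · rw [ind_false hpA, zero_mul, ind_false (fun h => hpA h.1)]
  have h2 : η * M * L1.card ≤ ∑ ℓ0 ∈ L0, avg ℓ0 H := by
    rw [Finset.sum_congr rfl h1, Finset.sum_comm]
    exact hsum
  have h3 : ∑ ℓ0 ∈ L0, avg ℓ0 H = (ls.map (fun ℓ => avg (ℓ - 0) H)).sum := by
    rw [Finset.sum_eq_multiset_sum, ← Finset.sort_eq L0 (· ≤ ·), Multiset.map_coe,
      Multiset.sum_coe]
    rfl
  rw [h3, ← EZ_sum 0 ls (fun _ _ => Nat.zero_le _) hpw H, hlen] at h2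
  have h4 : η * L1.card ≤ EZ 0 ls (fun Z => D M (fun t => H (evW Z t))) := by
    rw [← D_comm (EZ_isAv 0 ls)]
    unfold D
    rw [le_div_iff₀ hM0]
    linarith
  obtain ⟨Z, hZ, hZ2⟩ := (EZ_isAv (β := α) 0 ls).exists_gt _ (η / 2 * L1.card)
    (lt_of_lt_of_le (by nlinarith) h4)
  have hlev : ∀ t : List α, t.length < M → (evW Z t).length ∈ L0 := by
    intro t ht
    have := LevZ_length 0 ls Z hZ (fun _ _ => Nat.zero_le _) hpw t (by omega)
    rw [hmem] at this
    simpa using this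
  -- the event that a fixed line is good
  let good : List α × List (Option α) → List α → Prop := fun q x =>
    (evW Z q.1 ∈ A ∧ evW Z q.1 ++ x.drop (evW Z q.1).length ∈ A) ∧
    ∀ a, evW Z (q.1 ++ a :: q.2.map (fun o => o.getD a)) ∈ A ∧
      evW Z (q.1 ++ a :: q.2.map (fun o => o.getD a)) ++
        x.drop (evW Z (q.1 ++ a :: q.2.map (fun o => o.getD a))).length ∈ A
  let Cs' := Cs.filter (fun q => q.1.length + 1 + q.2.length < M)
  have h5 : ∀ x, D M (fun t => G x (evW Z t)) ≤ η / 4 + ∑ q ∈ Cs', ind (good q x) := by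
    intro x
    have hnn : ∀ q ∈ Cs', 0 ≤ ind (good q x) := fun q _ => ind_nonneg _
    by_cases hx : η / 4 ≤ D M (fun t => G x (evW Z t))
    · obtain ⟨c, w, hc1, hc2, hc3⟩ := hN {t | evW Z t ∈ A ∧ evW Z t ++ x.drop (evW Z t).length ∈ A} hx
      have hgood : good (c, w) x := ⟨hc1, hc2⟩
      have hq : (c, w) ∈ Cs' := by
        simp only [Cs', Finset.mem_filter, hCs, Set.Finite.mem_toFinset, Set.mem_prod]
        refine ⟨⟨?_, ?_⟩, hc3⟩
        · show c.length < M
          omega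
        · show w.length < M
          omega
      have h6 := Finset.single_le_sum hnn hq
      rw [ind_true hgood] at h6
      have h7 : D M (fun t => G x (evW Z t)) ≤ 1 := (D_isAv M hM).le_const _ _ fun t _ => ind_le_one _
      linarith
    · have := Finset.sum_nonneg hnn
      linarith
  have h6 : D M (fun t => H (evW Z t)) = ∑ ℓ ∈ L1, avg ℓ (fun x => D M (fun t => G x (evW Z t))) := by
    show D M (fun t => ∑ ℓ ∈ L1, avg ℓ (fun x => G x (evW Z t))) = _
    rw [(D_isAv M hM).sum]
    apply Finset.sum_congr rfl
    intro ℓ _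
    rw [avg_comm (D_isAv M hM)]
  have h7 : D M (fun t => H (evW Z t)) ≤ η / 4 * L1.card +
      ∑ q ∈ Cs', ∑ ℓ ∈ L1, avg ℓ (fun x => ind (good q x)) := by
    rw [h6, Finset.sum_comm]
    have : ∀ ℓ ∈ L1, avg ℓ (fun x => D M (fun t => G x (evW Z t))) ≤
        η / 4 + ∑ q ∈ Cs', avg ℓ (fun x => ind (good q x)) := by
      intro ℓ _
      rw [← (avg_isAv ℓ).sum]
      have := (avg_isAv ℓ).mono _ _ fun x (_ : x ∈ _) => h5 x
      rwa [(avg_isAv ℓ).add, (avg_isAv ℓ).const] at this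
    refine (Finset.sum_le_sum this).trans (le_of_eq ?_)
    rw [Finset.sum_add_distrib, Finset.sum_const, nsmul_eq_mul]
    ring
  have h8 : ∃ q ∈ Cs', η / 4 / (Cs.card + 1) * L1.card <
      ∑ ℓ ∈ L1, avg ℓ (fun x => ind (good q x)) := by
    by_contra hcon
    push Not at hcon
    have h9 := Finset.sum_le_sum hcon
    rw [Finset.sum_const, nsmul_eq_mul] at h9
    have h10 : (Cs'.card : ℝ) ≤ Cs.card := by exact_mod_cast Finset.card_filter_le _ _
    have h11 : (Cs'.card : ℝ) * (η / 4 / (Cs.card + 1) * L1.card) ≤ η / 4 * L1.card := by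
      have h12 : (Cs'.card : ℝ) / (Cs.card + 1) ≤ 1 := by
        rw [div_le_one (by positivity)]
        linarith
      calc (Cs'.card : ℝ) * (η / 4 / (Cs.card + 1) * L1.card) =
          (Cs'.card : ℝ) / (Cs.card + 1) * (η / 4 * L1.card) := by ring
        _ ≤ 1 * (η / 4 * L1.card) := by gcongr
        _ = _ := one_mul _
    linarith
  obtain ⟨⟨c, w⟩, hq, hqs⟩ := h8
  have hlen2 : c.length + 1 + w.length < M := (Finset.mem_filter.mp hq).2
  obtain ⟨w', hw'⟩ := (smW Z).line c w
  simp only [smW_id] at hw'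
  have hθ : 0 ≤ η / 4 / (Cs.card + 1) * L1.card := by positivity
  have hex : ∃ x, good (c, w) x := by
    by_contra hcon
    push Not at hcon
    have : ∑ ℓ ∈ L1, avg ℓ (fun x => ind (good (c, w) x)) = 0 := by
      apply Finset.sum_eq_zero
      intro ℓ _
      have : (fun x => ind (good (c, w) x)) = fun _ => 0 := funext fun x => ind_false (hcon x)
      rw [this, (avg_isAv ℓ).const]
    linarith
  obtain ⟨x0, hx0⟩ := hex
  have hl1 : ∀ a : α, (evW Z (c ++ a :: w.map (fun o => o.getD a))).length =
      (evW Z c).length + 1 + w'.length := by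
    intro a
    rw [hw']
    simp
    omega
  have hL1' : (evW Z c).length + 1 + w'.length ∈ L0 := by
    rw [← hl1 (Classical.arbitrary α)]
    apply hlev
    simp
    omega
  refine ⟨evW Z c, w', hx0.1.1, fun a => ?_, hlev c (by omega), hL1', ?_⟩
  · rw [← hw']
    exact (hx0.2 a).1
  · refine hqs.le.trans (Finset.sum_le_sum fun ℓ hℓ => ?_)
    have hle := hlt _ hL1' ℓ hℓ
    let a0 := Classical.arbitrary α
    rw [← hl1 a0, ← avg_drop_len _ ℓ (by rw [hl1]; omega)]
    apply (avg_isAv ℓ).mono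
    intro x _
    apply ind_mono
    intro hg a
    have := (hg.2 a).2
    rw [hl1, hw'] at this
    rw [hl1]
    exact this

/-- Multidimensional version. -/
theorem multi (hT : TT α) (m : ℕ) : ∀ δ : ℝ, 0 < δ → ∃ N, 1 ≤ N ∧ ∀ Q : Set (List α),
    δ ≤ D N (fun x => ind (x ∈ Q)) → ∃ ψ : SMap α, ∀ t : List α, t.length < m → ψ.ev id t ∈ Q := by
  induction m with
  | zero => exact fun δ _ => ⟨1, le_rfl, fun Q _ => ⟨SMap.idm, fun t ht => absurd ht (by simp)⟩⟩
  | succ m ih =>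
    intro δ hδ
    obtain ⟨M, θ, hM, hθ, hP⟩ := pair hT (δ ^ 2 / 4) (by positivity)
    obtain ⟨Nm, hNm, hI⟩ := ih (θ * (δ ^ 2 / 4) / 2) (by positivity)
    obtain ⟨q0, hq0⟩ := exists_nat_ge (2 / δ ^ 2)
    have hM0 : (0 : ℝ) < M := by exact_mod_cast hM
    have hq0p : (0 : ℝ) < q0 := lt_of_lt_of_le (by positivity) hq0
    have hq0n : 1 ≤ q0 := by exact_mod_cast hq0p
    have hNm0 : (1 : ℝ) ≤ Nm := by exact_mod_cast hNm
    set q := q0 * Nm with hq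
    have hq1 : 1 ≤ q := Nat.mul_pos hq0n hNm
    have hqR : (0 : ℝ) < q := by exact_mod_cast hq1
    have hqge : 2 / δ ^ 2 ≤ q := by
      rw [hq]
      push_cast
      nlinarith
    have hqge' : 2 ≤ δ ^ 2 * q := by
      rw [div_le_iff₀ (by positivity)] at hqge
      linarith
    refine ⟨q * M, Nat.mul_pos hq1 hM, fun Q hQ => ?_⟩
    set N := q * M with hN
    have hN0 : (0 : ℝ) < N := by
      rw [hN]; push_cast; positivity
    -- random word of length N
    let a : ℕ → List α → ℝ := fun ℓ x => ind (x.take ℓ ∈ Q)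
    let Y : ℕ → List α → ℝ := fun j x => ∑ ℓ ∈ Finset.Ico (j * M) ((j + 1) * M), a ℓ x
    let U : ℕ → List α → ℝ := fun j x => ∑ ℓ ∈ Finset.Ico (j * M) N, a ℓ x
    have hE := avg_isAv (α := α) N
    have hEa : ∀ ℓ ∈ range N, avg N (a ℓ) = avg ℓ (fun x => ind (x ∈ Q)) := by
      intro ℓ hℓ
      have hℓ' : ℓ ≤ N := (Finset.mem_range.mp hℓ).le
      have := avg_take ℓ (N - ℓ) (fun x : List α => ind (x ∈ Q))
      rwa [Nat.add_sub_cancel' hℓ'] at this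
    have hU0 : δ * N ≤ avg N (U 0) := by
      show _ ≤ avg N (fun x => ∑ ℓ ∈ Finset.Ico (0 * M) N, a ℓ x)
      rw [hE.sum, Nat.zero_mul, ← Finset.range_eq_Ico, Finset.sum_congr rfl hEa]
      unfold D at hQ
      rwa [le_div_iff₀ hN0] at hQ
    have hYU : ∀ j < q, ∀ x, U j x = Y j x + U (j + 1) x := by
      intro j hj x
      have h1 : (j + 1) * M ≤ q * M := Nat.mul_le_mul_right M hj
      exact (Finset.sum_Ico_consecutive (fun ℓ => a ℓ x)
        (Nat.mul_le_mul_right M (Nat.le_succ j)) h1).symm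
    have hYM : ∀ j x, 0 ≤ Y j x ∧ Y j x ≤ M := by
      intro j x
      refine ⟨Finset.sum_nonneg fun ℓ _ => ind_nonneg _, ?_⟩
      have h1 : Y j x ≤ ∑ ℓ ∈ Finset.Ico (j * M) ((j + 1) * M), (1 : ℝ) :=
        Finset.sum_le_sum fun ℓ _ => ind_le_one _
      rw [Finset.sum_const, Nat.card_Ico, nsmul_eq_mul, mul_one, Nat.succ_mul,
        Nat.add_sub_cancel_left] at h1
      exact h1
    have htel : ∀ i ≤ q, ∀ x, U 0 x ^ 2 ≤ i * (M : ℝ) ^ 2 +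
        2 * ∑ j ∈ range i, Y j x * U (j + 1) x + U i x ^ 2 := by
      intro i
      induction i with
      | zero => intro _ x; simp
      | succ i ih' =>
        intro hi x
        have h1 := ih' (by omega) x
        rw [hYU i hi x] at h1
        have h2 := hYM i x
        rw [Finset.sum_range_succ]
        have h3 : Y i x ^ 2 ≤ (M : ℝ) ^ 2 := pow_le_pow_left₀ h2.1 h2.2 2
        push_cast
        nlinarith
    have h1 : (δ * N) ^ 2 ≤ q * (M : ℝ) ^ 2 +
        2 * ∑ j ∈ range q, avg N (fun x => Y j x * U (j + 1) x) := by
      have h2 : avg N (fun x => 2 * (δ * N) * U 0 x + -(δ * N) ^ 2) ≤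
          avg N (fun x => q * (M : ℝ) ^ 2 + 2 * ∑ j ∈ range q, Y j x * U (j + 1) x) := by
        apply hE.mono
        intro x _
        have h3 := htel q le_rfl x
        have h4 : U q x = 0 := by
          show ∑ ℓ ∈ Finset.Ico (q * M) N, a ℓ x = 0
          simp [hN]
        rw [h4] at h3
        nlinarith [sq_nonneg (U 0 x - δ * N)]
      rw [hE.add, hE.add, hE.const, hE.const, hE.smul, hE.smul,
        hE.sum (range q) (fun j x => Y j x * U (j + 1) x)] at h2
      have h5 : (δ * N) * (δ * N) ≤ (δ * N) * avg N (U 0) := by gcongr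
      have h6 : avg N (fun x => U 0 x) = avg N (U 0) := rfl
      rw [h6] at h2
      nlinarith
    have h2 : ∃ j ∈ range q, δ ^ 2 / 4 * q * (M : ℝ) ^ 2 ≤ avg N (fun x => Y j x * U (j + 1) x) := by
      apply Finset.exists_le_of_sum_le (by simp; omega)
      rw [Finset.sum_const, Finset.card_range, nsmul_eq_mul]
      have h3 : (N : ℝ) = q * M := by rw [hN]; push_cast; ring
      rw [h3] at h1
      have h4 : 2 * (q * (M : ℝ) ^ 2) ≤ (δ ^ 2 * q) * (q * (M : ℝ) ^ 2) := by gcongr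
      nlinarith
    obtain ⟨j, hj, hj2⟩ := h2
    have hjq : j < q := Finset.mem_range.mp hj
    set L0 := Finset.Ico (j * M) ((j + 1) * M) with hL0
    set L1 := Finset.Ico ((j + 1) * M) N with hL1
    have hjM : (j + 1) * M ≤ N := Nat.mul_le_mul_right M hjq
    have hcard0 : L0.card = M := by
      rw [hL0, Nat.card_Ico, Nat.succ_mul, Nat.add_sub_cancel_left]
    have hcard1 : (L1.card : ℝ) ≤ N := by
      rw [hL1, Nat.card_Ico]
      exact_mod_cast Nat.sub_le _ _
    have hexp : avg N (fun x => Y j x * U (j + 1) x) = ∑ ℓ ∈ L1, ∑ ℓ0 ∈ L0,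
        avg ℓ0 (fun p => ind (p ∈ Q) * avg (ℓ - ℓ0) (fun s => ind (p ++ s ∈ Q))) := by
      have : (fun x => Y j x * U (j + 1) x) = fun x => ∑ ℓ ∈ L1, ∑ ℓ0 ∈ L0, a ℓ0 x * a ℓ x := by
        funext x
        show (∑ ℓ0 ∈ L0, a ℓ0 x) * (∑ ℓ ∈ L1, a ℓ x) = _
        rw [Finset.sum_mul_sum, Finset.sum_comm]
      rw [this, hE.sum]
      apply Finset.sum_congr rfl
      intro ℓ hℓ
      rw [hE.sum]
      apply Finset.sum_congr rfl
      intro ℓ0 hℓ0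
      rw [hL1, Finset.mem_Ico] at hℓ
      rw [hL0, Finset.mem_Ico] at hℓ0
      have e1 := avg_take ℓ (N - ℓ) (fun x : List α => ind (x.take ℓ0 ∈ Q) * ind (x ∈ Q))
      rw [Nat.add_sub_cancel' hℓ.2.le] at e1
      have e2 : (fun x => a ℓ0 x * a ℓ x) =
          fun x : List α => ind ((x.take ℓ).take ℓ0 ∈ Q) * ind (x.take ℓ ∈ Q) := by
        funext x
        show ind (x.take ℓ0 ∈ Q) * ind (x.take ℓ ∈ Q) = _
        rw [List.take_take, min_eq_left (by omega)]
      rw [e2, e1]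
      have e3 := avg_append ℓ0 (ℓ - ℓ0) (fun x : List α => ind (x.take ℓ0 ∈ Q) * ind (x ∈ Q))
      rw [Nat.add_sub_cancel' (by omega)] at e3
      rw [e3]
      apply (avg_isAv ℓ0).congr
      intro p hp
      have hp' : p.length = ℓ0 := hp
      rw [← (avg_isAv (ℓ - ℓ0)).smul]
      congr 1
      funext y
      rw [← hp', List.take_left]
    have hup : avg N (fun x => Y j x * U (j + 1) x) ≤ M * L1.card := by
      apply hE.le_const
      intro x _
      have h3 : U (j + 1) x ≤ L1.card := by
        have h4 : U (j + 1) x ≤ ∑ ℓ ∈ L1, (1 : ℝ) := Finset.sum_le_sum fun ℓ _ => ind_le_one _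
        simpa using h4
      have h4 : 0 ≤ U (j + 1) x := Finset.sum_nonneg fun ℓ _ => ind_nonneg _
      have := hYM j x
      exact mul_le_mul this.2 h3 h4 hM0.le
    have hNe : (N : ℝ) = q * M := by rw [hN]; push_cast; ring
    have hL1big : δ ^ 2 / 4 * N ≤ L1.card := by
      have h3 : δ ^ 2 / 4 * N * M ≤ L1.card * M := by
        rw [hNe]
        nlinarith
      exact le_of_mul_le_mul_right h3 hM0
    have hL1ne : L1.Nonempty := by
      rw [← Finset.card_pos]
      have : (0 : ℝ) < L1.card := lt_of_lt_of_le (by positivity) hL1big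
      exact_mod_cast this
    obtain ⟨c, w, hc, hw, hlc, hlw, hs⟩ := hP L0 L1 hcard0 hL1ne (by
      intro x hx y hy
      rw [hL0, Finset.mem_Ico] at hx
      rw [hL1, Finset.mem_Ico] at hy
      omega) Q (by
      rw [← hexp]
      refine le_trans ?_ hj2
      have : δ ^ 2 / 4 * M * L1.card ≤ δ ^ 2 / 4 * M * N := by gcongr
      rw [hNe] at this
      nlinarith)
    set ℓ1 := c.length + 1 + w.length with hℓ1
    let Q' : Set (List α) := {s | ∀ a, c ++ a :: w.map (fun o => o.getD a) ++ s ∈ Q}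
    have hD : θ * (δ ^ 2 / 4) ≤ D N (fun x => ind (x ∈ Q')) := by
      unfold D
      rw [le_div_iff₀ hN0]
      have h3 : θ * (δ ^ 2 / 4) * N ≤ θ * L1.card := by
        rw [mul_assoc]
        gcongr
      refine h3.trans (hs.trans ?_)
      have h4 : ∑ ℓ ∈ L1, avg (ℓ - ℓ1) (fun s => ind (s ∈ Q')) =
          ∑ i ∈ L1.image (fun ℓ => ℓ - ℓ1), avg i (fun s => ind (s ∈ Q')) := by
        rw [Finset.sum_image]
        intro x hx y hy hxy
        simp only [hL1, Finset.coe_Ico, Set.mem_Ico] at hx hy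
        rw [hL0, Finset.mem_Ico] at hlw
        simp only at hxy
        omega
      refine (le_of_eq h4).trans (Finset.sum_le_sum_of_subset_of_nonneg ?_ ?_)
      · intro i hi
        obtain ⟨ℓ, hℓ, rfl⟩ := Finset.mem_image.mp hi
        rw [hL1, Finset.mem_Ico] at hℓ
        rw [Finset.mem_range]
        omega
      · intro i _ _
        exact (avg_isAv i).nonneg _ fun _ _ => ind_nonneg _
    have hNfac : N = (q0 * M) * Nm := by
      rw [hN, hq]; ring
    rw [hNfac, D_block] at hD
    have hav := IsAv.unif (range (q0 * M)) (by simp; omega)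
    obtain ⟨i, hi, hi2⟩ := hav.exists_gt (fun j => avg (j * Nm)
      (fun x => D Nm (fun y => ind (x ++ y ∈ Q')))) (θ * (δ ^ 2 / 4) / 2) (by
        rw [Finset.card_range]
        exact lt_of_lt_of_le (half_lt_self (by positivity)) hD)
    obtain ⟨x, hx, hx2⟩ := (avg_isAv (i * Nm)).exists_gt _ _ hi2
    obtain ⟨ψ, hψ⟩ := hI {y | x ++ y ∈ Q'} hx2.le
    refine ⟨SMap.seg c w x ψ, fun t ht => ?_⟩
    cases t with
    | nil =>
      show c.map id ∈ Q
      simpa using hc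
    | cons e t =>
      have h3 := hψ t (by simpa using ht) e
      show SMap.segEv c w x ψ id (e :: t) ∈ Q
      have h4 : (fun o : Option α => o.elim e id) = fun o => o.getD e := by
        funext o; cases o <;> rfl
      simp only [SMap.segEv, h4, List.map_id]
      simpa using h3

end pair

/-! ### Lifting -/

section lift

variable {α : Type} [Fintype α] [Nonempty α]

theorem lift (hT : TT α) (a : α) (m : ℕ) (hm : 1 ≤ m) (η : ℝ) (hη : 0 < η) :
    ∃ m', 1 ≤ m' ∧ m ∣ m' ∧ ∀ (P' : Set (List α)) (h : List (Option α) → ℝ), (∀ z, |h z| ≤ 2) →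
      η ≤ D m' (fun z => ind (z.map (fun o => o.getD a) ∈ P') * h z) →
      ∃ ψ : SMap (Option α), η / 4 < D m (fun t => h (ψ.ev id t)) := by
  obtain ⟨s, hs, hmulti⟩ := multi hT m (η / 16) (by positivity)
  let π : Option α → α := fun o => o.getD a
  have hπ : Function.Surjective π := fun c => ⟨some c, rfl⟩
  set K : ℝ := ((Fintype.card (Option α) : ℕ) : ℝ) with hK
  have hK1 : 1 ≤ K := by
    rw [hK]
    exact_mod_cast Fintype.card_pos
  have hs0 : (1 : ℝ) ≤ s := by exact_mod_cast hs
  set c : ℝ := s * (2 * K) * (1 + 8 / η * (s * K ^ s)) * (16 / η) with hc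
  have hc0 : 0 < c := by positivity
  obtain ⟨r, hr⟩ := exists_nat_ge (c ^ 2 + 1)
  have hr1 : (1 : ℝ) ≤ r := by nlinarith [sq_nonneg c]
  set R := m * r with hR
  have hrn : 1 ≤ r := by exact_mod_cast hr1
  have hR1 : 1 ≤ R := Nat.mul_pos hm hrn
  have hR0 : (0 : ℝ) < R := by exact_mod_cast hR1
  have hRc : c ^ 2 ≤ R := by
    have h1 : (1 : ℝ) ≤ m := by exact_mod_cast hm
    rw [hR]
    push_cast
    nlinarith
  have hsR : c ≤ √(R : ℝ) := Real.le_sqrt_of_sq_le hRc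
  have hsR0 : 0 < √(R : ℝ) := lt_of_lt_of_le hc0 hsR
  set κ : ℝ := K * (2 * √(R : ℝ)) / R with hκ
  have hκ0 : 0 ≤ κ := by positivity
  have hκ1 : s * κ * (1 + 8 / η * (s * K ^ s)) ≤ η / 16 := by
    have h1 : κ = 2 * K / √(R : ℝ) := by
      rw [hκ]
      field_simp
      rw [Real.sq_sqrt hR0.le]
    have h2 : κ ≤ 2 * K / c := by
      rw [h1]
      gcongr
    calc s * κ * (1 + 8 / η * (s * K ^ s)) ≤ s * (2 * K / c) * (1 + 8 / η * (s * K ^ s)) := by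
          gcongr
      _ = (c / c) * (η / 16) := by
        rw [hc]
        field_simp
      _ = η / 16 := by rw [div_self hc0.ne', one_mul]
  refine ⟨s * R, Nat.mul_pos hs hR1, Dvd.intro_left (s * r) (by rw [hR]; ring), ?_⟩
  intro P' h hh hD
  set f : List (Option α) → ℝ := fun z => ind (z.map π ∈ P') * h z with hf
  have hfb : ∀ z, |f z| ≤ 2 := by
    intro z
    rw [hf, abs_mul, abs_of_nonneg (ind_nonneg _)]
    have := ind_le_one (z.map π ∈ P')
    have := ind_nonneg (z.map π ∈ P')
    have := hh z
    have := abs_nonneg (h z)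
    nlinarith
  have hE := EW_isAv (β := Option α) R hR1 s
  have hDα := D_isAv (α := α) s hs
  -- replace letters by letters of the small alphabet
  have hrep : ∀ t t' : List (Option α), t.length < s → t.length = t'.length →
      EW R s (fun W => f (evW W t)) ≤ EW R s (fun W => f (evW W t')) + s * κ := by
    intro t t' ht htt
    have h1 := EW_inf (fun _ : Option α => ()) R hR1 2 (by norm_num) s (fun _ => 1) (by simp) f hfb
      t t' (by simp [List.map_const', htt]) ht
    simp only [one_mul] at h1
    rw [hE.sub] at h1
    have h2 := (le_abs_self _).trans h1
    have h3 : (t.length : ℝ) * κ ≤ s * κ := by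
      gcongr
    linarith
  have h1 : η - s * κ ≤ D s (fun t' : List α => EW R s (fun W => f (evW W (t'.map some)))) := by
    have e1 : D s (fun t => EW R s (fun W => f (evW W t))) = D (s * R) f := by
      rw [D_comm hE, EW_D R hR1]
    have e2 : D s (fun t => EW R s (fun W => f (evW W t))) ≤
        D s (fun t' : List α => EW R s (fun W => f (evW W (t'.map some))) + s * κ) := by
      unfold D
      gcongr with i hi
      have hi' : i < s := Finset.mem_range.mp hi
      apply (avg_isAv i).le_const
      intro t ht
      apply (avg_isAv i).const_le
      intro t' ht'
      have ht1 : t.length = i := ht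
      have ht2 : t'.length = i := ht'
      exact hrep t (t'.map some) (by omega) (by simp; omega)
    rw [hDα.add, hDα.const] at e2
    rw [e1] at e2
    linarith
  let J : List (List (Option α) × List (Option α)) → List α → ℝ := fun W t' =>
    LfW π (mW π W) (fun W' => f (evW W' (t'.map some)))
  have h2 : η - s * κ ≤ EW R s (fun W => D s (J W)) := by
    rw [← D_comm hE]
    refine h1.trans (le_of_eq ?_)
    congr 1
    funext t'
    exact EW_LfW π hπ R s _
  let osc : List (List (Option α) × List (Option α)) → List (Option α) → ℝ := fun W t =>
    |LfW π (mW π W) (fun W' => h (evW W' t) - h (evW W' (t.map (fun o => some (π o)))))|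
  let Osc : List (List (Option α) × List (Option α)) → ℝ := fun W =>
    ∑ i ∈ range s, K ^ i * avg i (osc W)
  have hOsc1 : EW R s Osc ≤ s * K ^ s * (s * κ) := by
    show EW R s (fun W => ∑ i ∈ range s, K ^ i * avg i (osc W)) ≤ _
    rw [hE.sum]
    have h3 : ∀ i ∈ range s, EW R s (fun W => K ^ i * avg i (osc W)) ≤ K ^ s * (s * κ) := by
      intro i hi
      have hi' : i < s := Finset.mem_range.mp hi
      rw [hE.smul]
      have h4 : EW R s (fun W => avg i (osc W)) ≤ s * κ := by
        have h5 : EW R s (fun W => avg i (osc W)) = avg i (fun t => EW R s (fun W => osc W t)) :=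
          (avg_comm hE i (fun t W => osc W t)).symm
        rw [h5]
        apply (avg_isAv i).le_const
        intro t ht
        have ht' : t.length = i := ht
        have h6 := EW_abs_inf π hπ R hR1 2 (by norm_num) s h hh t (t.map (fun o => some (π o)))
          (by simp [π, Function.comp_def]) (by omega)
        refine h6.trans ?_
        have : (t.length : ℝ) ≤ s := by
          exact_mod_cast (by omega : t.length ≤ s)
        gcongr
      have h7 : 0 ≤ s * κ := by positivity
      calc K ^ i * EW R s (fun W => avg i (osc W)) ≤ K ^ i * (s * κ) := by gcongr
        _ ≤ K ^ s * (s * κ) := by gcongr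
    refine (Finset.sum_le_sum h3).trans (le_of_eq ?_)
    rw [Finset.sum_const, Finset.card_range, nsmul_eq_mul]
    ring
  have hosc : ∀ W t, t.length < s → osc W t ≤ Osc W := by
    intro W t ht
    have h3 := le_avg_mul (osc W) (fun x => abs_nonneg _) t
    refine h3.trans ?_
    exact Finset.single_le_sum (f := fun i => K ^ i * avg i (osc W))
      (fun i _ => mul_nonneg (by positivity) ((avg_isAv i).nonneg _ fun x _ => abs_nonneg _))
      (Finset.mem_range.mpr ht)
  obtain ⟨W, _, hW⟩ := hE.exists_gt (fun W => D s (J W) - 8 / η * Osc W) (7 * η / 8) (by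
    rw [hE.sub, hE.smul]
    have h3 : 8 / η * EW R s (fun W => Osc W) ≤ 8 / η * (s * K ^ s * (s * κ)) := by
      gcongr
    have h4 : s * κ * (1 + 8 / η * (s * K ^ s)) = s * κ + 8 / η * (s * K ^ s * (s * κ)) := by ring
    linarith)
  have hav := LfW_isAv π hπ (mW π W)
  have hJ2 : ∀ t', J W t' ≤ 2 := fun t' =>
    hav.le_const _ _ fun W' _ => (le_abs_self _).trans (hfb _)
  have hDJ2 : D s (J W) ≤ 2 := hDα.le_const _ _ fun t _ => hJ2 t
  have hOsc0 : 0 ≤ Osc W := Finset.sum_nonneg fun i _ =>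
    mul_nonneg (by positivity) ((avg_isAv i).nonneg _ fun x _ => abs_nonneg _)
  have hOscW : Osc W ≤ η / 4 := by
    have h3 : 8 / η * Osc W ≤ 8 / η * (η / 4) := by
      have : 8 / η * (η / 4) = 2 := by field_simp; norm_num
      linarith
    exact le_of_mul_le_mul_left h3 (by positivity)
  have hDJ : 7 * η / 8 < D s (J W) := by
    have : 0 ≤ 8 / η * Osc W := by positivity
    linarith
  let Q : Set (List α) := {t' | t'.length < s ∧ 3 * η / 4 ≤ J W t'}
  have hQ : η / 16 ≤ D s (fun t' => ind (t' ∈ Q)) := by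
    have h3 : D s (J W) ≤ D s (fun t' => 3 * η / 4 + 2 * ind (t' ∈ Q)) := by
      apply hDα.mono
      intro t' ht'
      by_cases h4 : 3 * η / 4 ≤ J W t'
      · rw [ind_true (show t' ∈ Q from ⟨ht', h4⟩)]
        have := hJ2 t'
        linarith
      · have := ind_nonneg (t' ∈ Q)
        linarith
    rw [hDα.add, hDα.const, hDα.smul] at h3
    linarith
  obtain ⟨ψ', hψ'⟩ := hmulti Q hQ
  have key : ∀ t' ∈ Q, 3 * η / 4 ≤ LfW π (mW π W) (fun W' => h (evW W' (t'.map some))) := by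
    intro t' ht'
    have h3 : J W t' = ind (evW (mW π W) t' ∈ P') *
        LfW π (mW π W) (fun W' => h (evW W' (t'.map some))) := by
      rw [← hav.smul]
      apply hav.congr
      intro W' hW'
      have hW'' : mW π W' = mW π W := hW'
      show ind ((evW W' (t'.map some)).map π ∈ P') * _ = _
      rw [evW_map, hW'', map_getD_some]
    have h4 := ht'.2
    rw [h3] at h4
    by_cases h5 : evW (mW π W) t' ∈ P'
    · rwa [ind_true h5, one_mul] at h4
    · rw [ind_false h5, zero_mul] at h4
      linarith
  have key2 : ∀ t : List (Option α), t.length < m →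
      η / 2 ≤ LfW π (mW π W) (fun W' => h (evW W' (ψ'.ev some t))) := by
    intro t ht
    have e1 : (ψ'.ev some t).map π = ψ'.ev id (t.map π) := ψ'.nat π some t
    have h3 : ψ'.ev id (t.map π) ∈ Q := hψ' _ (by simpa using ht)
    have h4 := key _ h3
    have h5 : (ψ'.ev some t).length < s := by
      have := h3.1
      rw [← e1] at this
      simpa using this
    have h6 := hosc W _ h5
    have h7 : (ψ'.ev some t).map (fun o => some (π o)) = (ψ'.ev id (t.map π)).map some := by
      rw [← e1, List.map_map]
      rfl
    have h8 : osc W (ψ'.ev some t) = |LfW π (mW π W) (fun W' => h (evW W' (ψ'.ev some t))) -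
        LfW π (mW π W) (fun W' => h (evW W' ((ψ'.ev id (t.map π)).map some)))| := by
      rw [← hav.sub, ← h7]
    rw [h8] at h6
    have := neg_abs_le (LfW π (mW π W) (fun W' => h (evW W' (ψ'.ev some t))) -
        LfW π (mW π W) (fun W' => h (evW W' ((ψ'.ev id (t.map π)).map some))))
    linarith
  have hDm := D_isAv (α := Option α) m hm
  have h9 : η / 2 ≤ LfW π (mW π W) (fun W' => D m (fun t => h (evW W' (ψ'.ev some t)))) := by
    rw [← D_comm hav]
    exact hDm.const_le _ _ fun t ht => key2 t ht
  obtain ⟨W', _, hW'⟩ := hav.exists_gt _ (η / 4) (lt_of_lt_of_le (by linarith) h9)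
  refine ⟨(smW W').comp (ψ'.cmap some), ?_⟩
  have e2 : ∀ t, ((smW W').comp (ψ'.cmap some)).ev id t = evW W' (ψ'.ev some t) := by
    intro t
    show (smW W').ev id _ = _
    rw [smW_id]
    rfl
  simp only [e2]
  exact hW'

/-- Density increment from a product of insensitive sets. -/
theorem inc (hT : TT α) (m : ℕ) (hm : 1 ≤ m) (l : List α) : ∀ η : ℝ, 0 < η →
    ∃ m', 1 ≤ m' ∧ m ∣ m' ∧ ∀ (P' : α → Set (List α)) (h : List (Option α) → ℝ), (∀ z, |h z| ≤ 2) →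
      η ≤ D m' (fun z => (1 - ind (∀ a ∈ l, z.map (fun o => o.getD a) ∈ P' a)) * h z) →
      ∃ ψ : SMap (Option α), 0 < D m (fun t => h (ψ.ev id t)) := by
  induction l with
  | nil =>
    intro η hη
    refine ⟨m, hm, dvd_rfl, fun P' h hh hD => ?_⟩
    exfalso
    have h1 : (fun z : List (Option α) => (1 - ind (∀ a ∈ ([] : List α),
        z.map (fun o => o.getD a) ∈ P' a)) * h z) = fun _ => 0 := by
      funext z
      rw [ind_true (by simp)]
      ring
    rw [h1, (D_isAv m hm).const] at hD
    linarith
  | cons b l ih =>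
    intro η hη
    obtain ⟨m1, hm1, hdvd1, hI⟩ := ih (η / 8) (by positivity)
    obtain ⟨m', hm', hdvd, hL⟩ := lift hT b m1 hm1 (η / 2) (by positivity)
    refine ⟨m', hm', hdvd1.trans hdvd, fun P' h hh hD => ?_⟩
    have hDm := D_isAv (α := Option α) m' hm'
    have hsplit : ∀ z : List (Option α), (1 - ind (∀ a ∈ b :: l, z.map (fun o => o.getD a) ∈ P' a)) * h z =
        ind (z.map (fun o => o.getD b) ∈ (P' b)ᶜ) * h z +
        ind (z.map (fun o => o.getD b) ∈ P' b) *
          ((1 - ind (∀ a ∈ l, z.map (fun o => o.getD a) ∈ P' a)) * h z) := by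
      intro z
      by_cases h1 : z.map (fun o => o.getD b) ∈ P' b
      · rw [ind_true h1, ind_false (show ¬ (z.map (fun o => o.getD b) ∈ (P' b)ᶜ) from
          fun h2 => h2 h1)]
        have : (∀ a ∈ b :: l, z.map (fun o => o.getD a) ∈ P' a) ↔
          (∀ a ∈ l, z.map (fun o => o.getD a) ∈ P' a) := by
          simp [h1]
        simp only [this]
        ring
      · rw [ind_false h1, ind_true (show (z.map (fun o => o.getD b) ∈ (P' b)ᶜ) from h1),
          ind_false (fun h2 => h1 (h2 b (by simp)))]
        ring
    simp only [hsplit] at hD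
    rw [hDm.add] at hD
    by_cases hc : η / 2 ≤ D m' (fun z => ind (z.map (fun o => o.getD b) ∈ (P' b)ᶜ) * h z)
    · obtain ⟨ψ, hψ⟩ := hL _ h hh hc
      obtain ⟨q, rfl⟩ := hdvd1
      rw [mul_comm, D_block] at hψ
      have hq : 1 ≤ q := by
        rcases Nat.eq_zero_or_pos q with h0 | h0
        · subst h0; simp at hm1
        · exact h0
      have hav := IsAv.unif (range q) (by simp; omega)
      obtain ⟨i, _, hi⟩ := hav.exists_gt (fun j => avg (j * m)
        (fun x => D m (fun y => h (ψ.ev id (x ++ y))))) 0 (by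
          rw [Finset.card_range]
          exact lt_trans (by positivity) hψ)
      obtain ⟨x, _, hx⟩ := (avg_isAv (i * m)).exists_gt _ _ hi
      refine ⟨ψ.comp (shiftMap x), ?_⟩
      have e : ∀ t, (ψ.comp (shiftMap x)).ev id t = ψ.ev id (x ++ t) := by
        intro t
        show ψ.ev id (x.map id ++ t) = _
        rw [List.map_id]
      simp only [e]
      exact hx
    · obtain ⟨ψ, hψ⟩ := hL (P' b)
        (fun z => (1 - ind (∀ a ∈ l, z.map (fun o => o.getD a) ∈ P' a)) * h z) (by
          intro z
          rw [abs_mul]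
          have h1 := ind_nonneg (∀ a ∈ l, z.map (fun o => o.getD a) ∈ P' a)
          have h2 := ind_le_one (∀ a ∈ l, z.map (fun o => o.getD a) ∈ P' a)
          rw [abs_of_nonneg (by linarith)]
          have h3 := hh z
          have h4 := abs_nonneg (h z)
          nlinarith) (by linarith)
      have e : ∀ a t, (ψ.ev id t).map (fun o => o.getD a) =
          ψ.ev (fun o => o.getD a) (t.map (fun o => o.getD a)) := fun a t => ψ.nat _ _ _
      obtain ⟨ψ2, hψ2⟩ := hI (fun a => {y | ψ.ev (fun o => o.getD a) y ∈ P' a})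
        (fun t => h (ψ.ev id t)) (fun z => hh _) (by
          simp only [e] at hψ
          refine le_trans (le_of_eq (by ring)) hψ.le)
      exact ⟨ψ.comp ψ2, hψ2⟩

end lift

/-! ### The induction step -/

section step

theorem EW_pt {β : Type} [Fintype β] [Nonempty β] (R : ℕ) (hR : 1 ≤ R) (C : ℝ) (s : ℕ)
    (t : List β) (f : List β → ℝ) (hf : ∀ y, D R (fun u => f (y ++ u)) ≤ C) (ht : t.length < s) :
    EW R s (fun W => f (evW W t)) ≤ C := by
  induction t generalizing s f with
  | nil =>
    have h1 := EW_level R hR s 0 ht f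
    simp only [avg_zero, Nat.zero_mul] at h1
    rw [h1]
    exact hf []
  | cons e t ih =>
    obtain ⟨s, rfl⟩ := Nat.exists_eq_succ_of_ne_zero (by omega : s ≠ 0)
    simp only [EW_succ, evW]
    apply (OB_isAv R hR).le_const (fun p => EW R s (fun W => f (p.1 ++ e :: (p.2 ++ evW W t))))
    intro p _
    have h1 := ih s (fun z => f (p.1 ++ e :: (p.2 ++ z))) (by
      intro y
      have := hf (p.1 ++ e :: (p.2 ++ y))
      simpa using this) (by simpa using ht)
    exact h1

theorem split_unique {α : Type} (c c' : List α) (s s' : List (Option α))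
    (h : c.map some ++ none :: s = c'.map some ++ none :: s') : c = c' := by
  induction c generalizing c' with
  | nil => cases c' <;> simp_all
  | cons a c ih =>
    cases c' with
    | nil => simp_all
    | cons a' c' =>
      simp at h
      rw [h.1, ih c' (by simpa using h.2)]

variable {α : Type} [Fintype α] [Nonempty α]

/-- abstract contradiction -/
theorem step_aux (hT : TT α) (d : ℝ) (hd : 0 < d) (hd1 : d ≤ 1)
    (lo : ∀ ε : ℝ, 0 < ε → ∀ N, 1 ≤ N → ∃ A : Set (List (Option α)), ¬ HasLine A ∧
      d - ε < D N (fun x => ind (x ∈ A)))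
    (hi : ∀ ε : ℝ, 0 < ε → ∃ R, 1 ≤ R ∧ ∀ A : Set (List (Option α)), ¬ HasLine A →
      D R (fun x => ind (x ∈ A)) < d + ε) : False := by
  classical
  obtain ⟨M, hM, hTM⟩ := hT.bounded (d / 4) (by positivity)
  have hfin : (({c : List α | c.length < M}) ×ˢ ({w : List (Option α) | w.length < M})).Finite :=
    (List.finite_length_lt α M).prod (List.finite_length_lt (Option α) M)
  set P := hfin.toFinset with hP
  set θ : ℝ := d / (4 * (P.card + 1)) with hθ
  have hθ0 : 0 < θ := by positivity
  have hθP : P.card * θ ≤ d / 4 := by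
    rw [hθ, mul_div_assoc', div_le_div_iff₀ (by positivity) (by norm_num)]
    nlinarith
  have hθ1 : θ ≤ 1 := by
    rw [hθ, div_le_one (by positivity)]
    have : (0 : ℝ) ≤ P.card := by positivity
    linarith
  have hdθ : 0 < d * θ := by positivity
  have hdθ1 : d * θ ≤ d := by nlinarith
  obtain ⟨mk, hmk, hhi⟩ := hi (d * θ / 8) (by positivity)
  obtain ⟨m', hm', _, hinc⟩ := inc hT mk hmk (Finset.univ : Finset α).toList (d * θ / 2)
    (by positivity)
  obtain ⟨n, hRL⟩ := RL α m' M Unit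
  set s := n + 1 with hs
  set K : ℝ := ((Fintype.card (Option α) : ℕ) : ℝ) with hK
  have hK1 : 1 ≤ K := by
    rw [hK]
    exact_mod_cast Fintype.card_pos
  have hs0 : (0 : ℝ) < s := by rw [hs]; positivity
  set ε : ℝ := d * θ / 8 / (2 * s * K ^ s) with hε
  have hε0 : 0 < ε := by positivity
  have hεe : K ^ s * (s * (2 * ε)) = d * θ / 8 := by
    rw [hε]
    field_simp
  obtain ⟨R, hR, hhiR⟩ := hi ε hε0
  obtain ⟨A, hA, hloA⟩ := lo ε hε0 (s * R) (Nat.mul_pos (by omega) hR)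
  have hE := EW_isAv (β := Option α) R hR s
  set q : List (Option α) → ℝ := fun t => EW R s (fun W => ind (evW W t ∈ A)) with hq
  have hqle : ∀ t, t.length < s → q t ≤ d + ε := by
    intro t ht
    apply EW_pt R hR _ s t (fun z => ind (z ∈ A)) _ ht
    intro y
    exact (hhiR {u | y ++ u ∈ A} (fun h => hA (h.shift y))).le
  have hDs := D_isAv (α := Option α) s (by omega)
  have hDq : d - ε < D s q := by
    rw [hq, D_comm hE, EW_D R hR s (fun z => ind (z ∈ A))]
    exact hloA
  have hqge : ∀ t, t.length < s → d - d * θ / 8 ≤ q t := by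
    intro t ht
    let g : List (Option α) → ℝ := fun x => max 0 (d + ε - q x)
    have h1 := le_avg_mul g (fun x => le_max_left _ _) t
    have h2 : D s g ≤ 2 * ε := by
      have : D s g = D s (fun x => d + ε - q x) := by
        apply hDs.congr
        intro x hx
        have := hqle x hx
        exact max_eq_right (by linarith)
      rw [this, hDs.sub, hDs.const]
      linarith
    have h3 : avg t.length g ≤ s * (2 * ε) := by
      unfold D at h2
      rw [div_le_iff₀ hs0] at h2
      have h4 := Finset.single_le_sum (f := fun i => avg i g) (s := range s)
        (fun i _ => (avg_isAv i).nonneg _ fun x _ => le_max_left _ _) (Finset.mem_range.mpr ht)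
      linarith
    have h4 : g t ≤ K ^ s * (s * (2 * ε)) := by
      refine h1.trans ?_
      have : (Fintype.card (Option α) : ℝ) ^ t.length ≤ K ^ s := by
        apply pow_le_pow_right₀ hK1 ht.le
      have h5 : 0 ≤ avg t.length g := (avg_isAv _).nonneg _ fun x _ => le_max_left _ _
      calc _ ≤ K ^ s * avg t.length g := by gcongr
        _ ≤ _ := by gcongr
    have h5 : d + ε - q t ≤ g t := le_max_right _ _
    rw [hεe] at h4
    linarith
  let Pr : List α → List (Option α) → ℝ := fun c x => EW R s (fun W =>
    ind (evW W (c.map some) ∈ A ∧ ∀ a : α, evW W (x.map (fun o => some (o.getD a))) ∈ A))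
  let G : Unit → Set (List (Option α)) := fun _ =>
    {x | ∃ c r, x = c.map some ++ none :: r ∧ θ ≤ Pr c x}
  have hsome : ∀ (φ : SMap α) (c : List α), φ.ev some (c.map some) = (φ.ev id c).map some :=
    fun φ c => (φ.nat some id c).symm
  rcases hRL G with ⟨_, φ, hφ, hφn⟩ | ⟨φ, hφ, hφn⟩
  · -- good case
    have hc0 : φ.ev some [] = (φ.ev id []).map some := hsome φ []
    have hmap : ∀ z a, (φ.ev some (none :: z)).map (fun o => some (o.getD a)) =
        φ.ev some (some a :: (z.map (fun o => o.getD a)).map some) := by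
      intro z a
      rw [φ.nat]
      simp [Function.comp_def]
    let P' : List (List (Option α) × List (Option α)) → α → Set (List α) := fun W a =>
      {y | evW W (φ.ev some []) ∈ A ∧ evW W (φ.ev some (some a :: y.map some)) ∈ A}
    let DD : List (List (Option α) × List (Option α)) → List (Option α) → Prop := fun W z =>
      ∀ a ∈ (Finset.univ : Finset α).toList, z.map (fun o => o.getD a) ∈ P' W a
    have hDD : ∀ z, z.length < m' → θ ≤ EW R s (fun W => ind (DD W z)) := by
      intro z hz
      obtain ⟨c, r, hcr, hPr⟩ := hφ z hz
      obtain ⟨s0, hs0'⟩ := φ.tree some [] none z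
      have hcc : c = φ.ev id [] := by
        apply split_unique c _ r s0
        rw [← hcr, ← hc0]
        exact hs0'
      refine hPr.trans (hE.mono _ _ fun W _ => ind_mono ?_)
      rintro ⟨h1, h2⟩ a _
      refine ⟨?_, ?_⟩
      · rw [hc0, ← hcc]; exact h1
      · rw [← hmap]; exact h2 a
    have hZD : ∀ W z, DD W z → evW W (φ.ev some (none :: z)) ∉ A := by
      intro W z hD hZ
      apply hA
      apply ((smW W).comp (φ.cmap some)).pullback A
      have e2 : ∀ t, ((smW W).comp (φ.cmap some)).ev id t = evW W (φ.ev some t) := by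
        intro t
        show (smW W).ev id _ = _
        rw [smW_id]
        rfl
      simp only [e2]
      have hD' : ∀ a, z.map (fun o => o.getD a) ∈ P' W a := fun a => hD a (by simp)
      refine ⟨[], z.map (fun o => o.map some), (hD' (Classical.arbitrary α)).1, ?_⟩
      intro e
      cases e with
      | none =>
        have e3 : (z.map (fun o => o.map some)).map (fun o => o.getD (none : Option α)) = z := by
          rw [List.map_map]
          conv_rhs => rw [← List.map_id z]
          apply List.map_congr_left
          intro o _
          cases o <;> rfl
        show evW W (φ.ev some ([] ++ none :: _)) ∈ A
        rw [e3]
        exact hZ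
      | some a =>
        have e3 : (z.map (fun o => o.map some)).map (fun o => o.getD (some a)) =
            (z.map (fun o => o.getD a)).map some := by
          rw [List.map_map, List.map_map]
          apply List.map_congr_left
          intro o _
          cases o <;> rfl
        show evW W (φ.ev some ([] ++ some a :: _)) ∈ A
        rw [e3]
        exact (hD' a).2
    have hDm := D_isAv (α := Option α) m' hm'
    let h : List (List (Option α) × List (Option α)) → List (Option α) → ℝ := fun W z =>
      ind (evW W (φ.ev some (none :: z)) ∈ A) - (d + d * θ / 8)
    have hpt : ∀ W z, (1 - ind (DD W z)) * h W z =
        ind (evW W (φ.ev some (none :: z)) ∈ A) - (d + d * θ / 8) +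
          (d + d * θ / 8) * ind (DD W z) := by
      intro W z
      by_cases h1 : DD W z
      · rw [ind_true h1, ind_false (hZD W z h1)]
        ring
      · rw [ind_false h1]
        simp [h]
    have hmain : d * θ / 2 < EW R s (fun W => D m' (fun z => (1 - ind (DD W z)) * h W z)) := by
      rw [← D_comm hE]
      refine lt_of_lt_of_le (b := 3 * (d * θ) / 4) (by linarith) (hDm.const_le _ _ ?_)
      intro z hz
      have hz' : z.length < m' := hz
      simp only [hpt]
      rw [hE.add, hE.sub, hE.const, hE.smul]
      have h1 := hDD z hz'
      have h2 : d - d * θ / 8 ≤ EW R s (fun W => ind (evW W (φ.ev some (none :: z)) ∈ A)) :=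
        hqge _ (lt_trans (hφn _ (by simpa using hz')) (by omega))
      have h3 : d * θ ≤ (d + d * θ / 8) * EW R s (fun W => ind (DD W z)) := by
        apply mul_le_mul _ h1 hθ0.le (by positivity)
        linarith
      linarith
    obtain ⟨W, _, hW⟩ := hE.exists_gt _ _ hmain
    obtain ⟨ψ, hψ⟩ := hinc (P' W) (h W) (by
      intro z
      have h1 := ind_nonneg (evW W (φ.ev some (none :: z)) ∈ A)
      have h2 := ind_le_one (evW W (φ.ev some (none :: z)) ∈ A)
      rw [abs_le]
      constructor <;> simp only [h] <;> linarith) hW.le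
    have hDk := D_isAv (α := Option α) mk hmk
    have h5 := hhi {t | evW W (φ.ev some (none :: ψ.ev id t)) ∈ A} (by
      intro hl
      apply hA
      apply ((smW W).comp ((φ.cmap some).comp ((shiftMap [none]).comp ψ))).pullback A
      have e2 : ∀ t, ((smW W).comp ((φ.cmap some).comp ((shiftMap [none]).comp ψ))).ev id t =
          evW W (φ.ev some (none :: ψ.ev id t)) := by
        intro t
        show (smW W).ev id _ = _
        rw [smW_id]
        rfl
      simp only [e2]
      exact hl)
    simp only [h] at hψ
    rw [hDk.sub, hDk.const] at hψ
    have h6 : D mk (fun t => ind (evW W (φ.ev some (none :: ψ.ev id t)) ∈ A)) =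
      D mk (fun x => ind (x ∈ {t | evW W (φ.ev some (none :: ψ.ev id t)) ∈ A})) := rfl
    rw [h6] at hψ
    linarith
  · -- bad case
    let B : List (List (Option α) × List (Option α)) → Set (List α) := fun W =>
      {t | evW W (φ.ev some (t.map some)) ∈ A}
    have hDM := D_isAv (α := α) M hM
    have h1 : d - d * θ / 8 ≤ EW R s (fun W => D M (fun t => ind (t ∈ B W))) := by
      rw [← D_comm hE]
      apply hDM.const_le
      intro t ht
      exact hqge _ (lt_trans (hφn _ (by simpa using ht)) (by omega))
    let ev : List α × List (Option α) → List (List (Option α) × List (Option α)) → Prop :=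
      fun p W => p.1 ∈ B W ∧ (∀ a, p.1 ++ a :: p.2.map (fun o => o.getD a) ∈ B W) ∧
        p.1.length + 1 + p.2.length < M
    have h2 : ∀ W, D M (fun t => ind (t ∈ B W)) - d / 4 ≤ ∑ p ∈ P, ind (ev p W) := by
      intro W
      by_cases h3 : d / 4 ≤ D M (fun t => ind (t ∈ B W))
      · obtain ⟨c, w, h4, h5, h6⟩ := hTM _ h3
        have h7 : ind (ev (c, w) W) ≤ ∑ p ∈ P, ind (ev p W) := by
          apply Finset.single_le_sum (f := fun p => ind (ev p W)) (fun p _ => ind_nonneg _)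
          rw [hP, Set.Finite.mem_toFinset]
          constructor
          · show c.length < M
            omega
          · show w.length < M
            omega
        rw [ind_true (show ev (c, w) W from ⟨h4, h5, h6⟩)] at h7
        have h8 : D M (fun t => ind (t ∈ B W)) ≤ 1 := hDM.le_const _ _ fun t _ => ind_le_one _
        linarith
      · have : 0 ≤ ∑ p ∈ P, ind (ev p W) := Finset.sum_nonneg fun p _ => ind_nonneg _
        linarith
    have h3 := hE.mono _ _ (fun W _ => h2 W)
    rw [hE.sub, hE.const, hE.sum] at h3
    have h4 : ∀ p ∈ P, EW R s (fun W => ind (ev p W)) ≤ θ := by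
      rintro ⟨c, w⟩ _
      by_cases hlen : c.length + 1 + w.length < M
      · have h5 := hφ () (c.map some ++ none :: w) (by simp; omega) (by simp)
        by_contra hgt
        push Not at hgt
        apply h5
        obtain ⟨s0, hs0'⟩ := φ.tree some (c.map some) none w
        refine ⟨φ.ev id c, s0, ?_, ?_⟩
        · rw [hs0', hsome]
        · refine hgt.le.trans (hE.mono _ _ fun W _ => ind_mono ?_)
          rintro ⟨h6, h7, _⟩
          refine ⟨?_, ?_⟩
          · rw [← hsome]; exact h6
          · intro a
            have h8 := h7 a
            rw [φ.nat]
            have e : (c.map some ++ none :: w).map (fun o => some (o.getD a)) =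
                (c ++ a :: w.map (fun o => o.getD a)).map some := by
              simp [Function.comp_def]
            rw [e]
            exact h8
      · have : (fun W => ind (ev (c, w) W)) = fun _ => 0 := by
          funext W
          exact ind_false fun h => hlen h.2.2
        rw [this, hE.const]
        exact hθ0.le
    have h5 := Finset.sum_le_card_nsmul P _ θ h4
    rw [nsmul_eq_mul] at h5
    linarith

theorem step (hT : TT α) : TT (Option α) := by
  by_contra hcon
  unfold TT at hcon
  push Not at hcon
  obtain ⟨δ, hδ, hcon⟩ := hcon
  let E : Set ℝ := {c | ∀ N, 1 ≤ N → ∃ A : Set (List (Option α)), ¬ HasLine A ∧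
    c ≤ D N (fun x => ind (x ∈ A))}
  have hδE : δ ∈ E := fun N hN => by
    obtain ⟨A, h1, h2⟩ := hcon N hN
    exact ⟨A, h2, h1⟩
  have hE1 : ∀ c ∈ E, c ≤ 1 := by
    intro c hc
    obtain ⟨A, _, h⟩ := hc 1 le_rfl
    exact h.trans ((D_isAv 1 le_rfl).le_const _ _ fun x _ => ind_le_one _)
  have hbdd : BddAbove E := ⟨1, hE1⟩
  refine step_aux hT (sSup E) (lt_of_lt_of_le hδ (le_csSup hbdd hδE)) (csSup_le ⟨δ, hδE⟩ hE1) ?_ ?_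
  · intro ε hε N hN
    obtain ⟨c, hc, hc2⟩ := exists_lt_of_lt_csSup ⟨δ, hδE⟩ (show sSup E - ε < sSup E by linarith)
    obtain ⟨A, h1, h2⟩ := hc N hN
    exact ⟨A, h1, lt_of_lt_of_le hc2 h2⟩
  · intro ε hε
    have h1 : sSup E + ε ∉ E := fun h => by
      have := le_csSup hbdd h
      linarith
    simp only [E, Set.mem_setOf_eq] at h1
    push Not at h1
    obtain ⟨N, hN, h⟩ := h1
    exact ⟨N, hN, h⟩

end step

/-! ### The density theorem for all alphabets -/

section all

theorem avg_equiv {α β : Type} [Fintype α] [Fintype β] (e : α ≃ β) (n : ℕ) (f : List β → ℝ) :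
    avg n (fun x : List α => f (x.map e)) = avg n f := by
  induction n generalizing f with
  | zero => rfl
  | succ n ih =>
    simp only [avg_succ, List.map_cons]
    unfold la
    rw [Fintype.card_congr e]
    congr 1
    rw [← Equiv.sum_comp e]
    apply Finset.sum_congr rfl
    intro a _
    exact ih (fun x => f (e a :: x))

theorem TT.equiv {α β : Type} [Fintype α] [Fintype β] (e : α ≃ β) (h : TT α) : TT β := by
  intro δ hδ
  obtain ⟨N, hN, hA⟩ := h δ hδ
  refine ⟨N, hN, fun A hD => ?_⟩
  obtain ⟨c, w, h1, h2⟩ := hA {x | x.map e ∈ A} (by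
    refine hD.trans (le_of_eq ?_)
    unfold D
    congr 1
    apply Finset.sum_congr rfl
    intro i _
    exact (avg_equiv e i (fun x => ind (x ∈ A))).symm)
  refine ⟨c.map e, w.map (fun o => o.map e), h1, fun b => ?_⟩
  have h3 : (c ++ (e.symm b) :: w.map (fun o => o.getD (e.symm b))).map e ∈ A := h2 (e.symm b)
  convert h3 using 1
  simp only [List.map_append, List.map_cons, List.map_map, Equiv.apply_symm_apply]
  congr 2
  apply List.map_congr_left
  intro o _
  cases o <;> simp

theorem avg_unique {α : Type} [Fintype α] [Unique α] (n : ℕ) (f : List α → ℝ) :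
    avg n f = f (List.replicate n default) := by
  induction n generalizing f with
  | zero => rfl
  | succ n ih =>
    simp only [avg_succ, ih]
    unfold la
    simp [List.replicate_succ]

theorem TT.unique {α : Type} [Fintype α] [Unique α] : TT α := by
  classical
  intro δ hδ
  obtain ⟨N, hN⟩ := exists_nat_gt (1 / δ)
  have hN0 : (0 : ℝ) < N := lt_trans (by positivity) hN
  have hN1 : 1 ≤ N := by exact_mod_cast hN0
  refine ⟨N, hN1, fun A hA => ?_⟩
  unfold D at hA
  simp only [avg_unique] at hA
  rw [le_div_iff₀ hN0] at hA
  rw [div_lt_iff₀ hδ] at hN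
  have h1 : ∑ i ∈ range N, ind (List.replicate i (default : α) ∈ A) =
      ((range N).filter (fun i => List.replicate i (default : α) ∈ A)).card := by
    simp [ind, Finset.sum_ite]
  have h2 : 1 < ((range N).filter (fun i => List.replicate i (default : α) ∈ A)).card := by
    rw [h1] at hA
    have : (1 : ℝ) < ((range N).filter (fun i => List.replicate i (default : α) ∈ A)).card := by
      linarith
    exact_mod_cast this
  obtain ⟨i, hi, j, hj, hij⟩ := Finset.one_lt_card.mp h2
  have hi' := (Finset.mem_filter.mp hi).2
  have hj' := (Finset.mem_filter.mp hj).2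
  have key : ∀ i j, i < j → List.replicate i (default : α) ∈ A →
      List.replicate j (default : α) ∈ A → HasLine A := by
    intro i j hlt h3 h4
    refine ⟨List.replicate i default, List.replicate (j - i - 1) none, h3, fun a => ?_⟩
    have : List.replicate i default ++ a :: (List.replicate (j - i - 1) (none : Option α)).map
        (fun o => o.getD a) = List.replicate j default := by
      rw [List.eq_replicate_iff]
      refine ⟨by simp; omega, fun b _ => Subsingleton.elim _ _⟩
    rw [this]
    exact h4
  rcases lt_or_gt_of_ne hij with h | h
  · exact key i j h hi' hj'
  · exact key j i h hj' hi'

theorem TT.fin (n : ℕ) : TT (Fin (n + 1)) := by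
  induction n with
  | zero => exact (TT.unique : TT Unit).equiv (Equiv.ofUnique Unit (Fin 1))
  | succ n ih => exact (step ih).equiv (finSuccEquiv (n + 1)).symm

end all

/-! ### Final deduction -/

theorem ncard_avg (k : ℕ) (hk : 1 ≤ k) (n : ℕ) (A : Set (List (Fin k))) :
    (Set.ncard {x ∈ A | x.length = n} : ℝ) = (k : ℝ) ^ n * avg n (fun x => ind (x ∈ A)) := by
  have hk0 : (k : ℝ) ≠ 0 := by exact_mod_cast (by omega : k ≠ 0)
  induction n generalizing A with
  | zero =>
    simp only [List.length_eq_zero_iff, avg_zero, pow_zero, one_mul]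
    by_cases h : [] ∈ A
    · have : {x ∈ A | x = []} = {[]} := by
        ext x
        constructor
        · exact fun hx => hx.2
        · rintro rfl
          exact ⟨h, rfl⟩
      rw [this, ind_true h]
      simp
    · have : {x ∈ A | x = []} = ∅ := by
        ext x
        simp only [Set.mem_setOf_eq, Set.mem_empty_iff_false, iff_false]
        rintro ⟨h1, rfl⟩
        exact h h1
      rw [this, ind_false h]
      simp
  | succ n ih =>
    have e : {x ∈ A | x.length = n + 1} ≃
        Σ a : Fin k, ({x ∈ {y | a :: y ∈ A} | x.length = n} : Set (List (Fin k))) :=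
      { toFun := fun x => match x with
          | ⟨a :: y, h⟩ => ⟨a, y, h.1, by simpa using h.2⟩
          | ⟨[], h⟩ => absurd h.2 (by simp)
        invFun := fun p => ⟨p.1 :: p.2.1, p.2.2.1, by simpa using p.2.2.2⟩
        left_inv := by
          rintro ⟨x, h1, h2⟩
          cases x with
          | nil => simp at h2
          | cons a y => rfl
        right_inv := by
          rintro ⟨a, y, h⟩
          rfl }
    have hf : ∀ a : Fin k, Finite ({x ∈ {y | a :: y ∈ A} | x.length = n} : Set (List (Fin k))) :=
      fun a => ((List.finite_length_eq (Fin k) n).subset fun x hx => hx.2)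
    rw [← Nat.card_coe_set_eq, Nat.card_congr e, Nat.card_sigma]
    push_cast
    simp only [Nat.card_coe_set_eq, ih, avg_succ, la, Fintype.card_fin]
    rw [← Finset.mul_sum, pow_succ]
    field_simp
    rfl

theorem dens_eq (k : ℕ) (hk : 1 ≤ k) (n : ℕ) (A : Set (Word k)) :
    _root_.dens k n A = avg n (fun x => ind (x ∈ A)) := by
  have hk0 : (k : ℝ) ≠ 0 := by exact_mod_cast (by omega : k ≠ 0)
  unfold _root_.dens
  rw [ncard_avg k hk]
  field_simp

/-- Markov: many indices have a large value. -/
theorem markov (L : Finset ℕ) (f : ℕ → ℝ) (b : ℝ) (hb : 0 ≤ b) (hf : ∀ ℓ ∈ L, f ℓ ≤ 1) :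
    ∑ ℓ ∈ L, f ℓ ≤ L.card * b + (L.filter (fun ℓ => b ≤ f ℓ)).card := by
  have h1 : ∀ ℓ ∈ L, f ℓ ≤ b + if b ≤ f ℓ then 1 else 0 := by
    intro ℓ hℓ
    have := hf ℓ hℓ
    split_ifs <;> linarith
  refine (Finset.sum_le_sum h1).trans (le_of_eq ?_)
  rw [Finset.sum_add_distrib]
  simp

theorem final (k : ℕ) (hk : 2 ≤ k) (δ : ℝ) (hδ0 : 0 < δ) (hδ1 : δ ≤ 1) :
    ∃ (Λ₀ : ℕ) (Θ₀ : ℝ), 1 ≤ Λ₀ ∧ 0 < Θ₀ ∧ Θ₀ ≤ δ ^ 2 / 8 ∧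
      ∀ L : Finset ℕ, L.Nonempty → ∀ A : Set (Word k), (∀ ℓ ∈ L, δ ≤ _root_.dens k ℓ A) →
        ∀ n : ℕ, 1 ≤ n → Λ₀ + ⌈2 / Θ₀ * (n : ℝ)⌉₊ ≤ L.card →
        ∀ L₀ : Finset ℕ, L₀ ⊆ L → L₀.card = Λ₀ →
          (∀ x ∈ L₀, ∀ y ∈ L \ L₀, x < y) →
          ((∃ L' ⊆ L \ L₀, n ≤ L'.card ∧ ∃ ℓ₀ ∈ L₀, ∃ t₀ : Word k, t₀.length = ℓ₀ ∧
              ∀ ℓ ∈ L', δ + δ ^ 2 / 8 ≤ _root_.dens k (ℓ - ℓ₀) {s | t₀ ++ s ∈ A}) ∨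
            (∃ L'' ⊆ L \ L₀, n ≤ L''.card ∧ ∃ (c : Word k) (w : VWord k),
              IsLeftVar w ∧
              insert c {x | ∃ a : Fin k, x = c ++ subst w a} ⊆ A ∧
              c.length ∈ L₀ ∧ c.length + w.length ∈ L₀ ∧
              ∀ ℓ ∈ L'', Θ₀ / 2 ≤ _root_.dens k (ℓ - (c.length + w.length))
                {s | ∀ a : Fin k, c ++ subst w a ++ s ∈ A})) := by
  classical
  obtain ⟨j, rfl⟩ : ∃ j, k = j + 1 := ⟨k - 1, by omega⟩
  obtain ⟨M, θ, hM, hθ, hpair⟩ := pair (TT.fin j) (δ ^ 2 / 2) (by positivity)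
  set Θ : ℝ := min θ (δ ^ 2 / 8) with hΘ
  have hΘ0 : 0 < Θ := lt_min hθ (by positivity)
  have hΘ1 : Θ ≤ θ := min_le_left _ _
  have hΘ2 : Θ ≤ δ ^ 2 / 8 := min_le_right _ _
  refine ⟨M, Θ, hM, hΘ0, hΘ2, ?_⟩
  intro L _ A hA n hn hcard L₀ hL₀ hL₀M hlt
  set L₁ := L \ L₀ with hL₁
  have hdens : ∀ n (A : Set (Word (j + 1))), _root_.dens (j + 1) n A = avg n (fun x => ind (x ∈ A)) :=
    fun n A => dens_eq (j + 1) (by omega) n A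
  simp only [hdens] at hA ⊢
  have hc : L₁.card + M = L.card := by
    rw [← hL₀M]
    exact Finset.card_sdiff_add_card_eq_card hL₀
  set r : ℝ := (L₁.card : ℝ) with hr
  have hn0 : (1 : ℝ) ≤ n := by exact_mod_cast hn
  have hrn : n ≤ r * Θ / 2 := by
    have h1 : (⌈2 / Θ * (n : ℝ)⌉₊ : ℝ) ≤ r := by
      rw [hr]
      exact_mod_cast (by omega : ⌈2 / Θ * (n : ℝ)⌉₊ ≤ L₁.card)
    have h2 := (Nat.le_ceil (2 / Θ * (n : ℝ))).trans h1
    rw [div_mul_eq_mul_div, div_le_iff₀ hΘ0] at h2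
    linarith
  have hr0 : 0 < r := by
    by_contra h
    push Not at h
    nlinarith
  have hne : L₁.Nonempty := by
    rw [← Finset.card_pos]
    rw [hr] at hr0
    exact_mod_cast hr0
  by_cases hi : ∃ L' ⊆ L₁, n ≤ L'.card ∧ ∃ ℓ₀ ∈ L₀, ∃ t₀ : Word (j + 1), t₀.length = ℓ₀ ∧
              ∀ ℓ ∈ L', δ + δ ^ 2 / 8 ≤ avg (ℓ - ℓ₀) (fun x => ind (x ∈ {s | t₀ ++ s ∈ A}))
  · exact Or.inl hi
  right
  set C : ℝ := δ + 3 * δ ^ 2 / 16 with hC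
  have hX : ∀ ℓ₀ ∈ L₀, ∀ p : Word (j + 1), p.length = ℓ₀ →
      ∑ ℓ ∈ L₁, avg (ℓ - ℓ₀) (fun s => ind (p ++ s ∈ A)) ≤ C * r := by
    intro ℓ₀ hℓ₀ p hp
    have h1 := markov L₁ (fun ℓ => avg (ℓ - ℓ₀) (fun s => ind (p ++ s ∈ A))) (δ + δ ^ 2 / 8)
      (by positivity) (fun ℓ _ => (avg_isAv _).le_const _ _ fun x _ => ind_le_one _)
    set F := L₁.filter (fun ℓ => δ + δ ^ 2 / 8 ≤ avg (ℓ - ℓ₀) (fun s => ind (p ++ s ∈ A))) with hF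
    have h2 : F.card < n := by
      by_contra hcon
      push Not at hcon
      exact hi ⟨F, Finset.filter_subset _ _, hcon, ℓ₀, hℓ₀, p, hp,
        fun ℓ hℓ => (Finset.mem_filter.mp hℓ).2⟩
    have h3 : (F.card : ℝ) ≤ n := by exact_mod_cast h2.le
    have h4 : r * Θ ≤ r * (δ ^ 2 / 8) := by gcongr
    rw [hC]
    refine h1.trans ?_
    rw [← hr]
    nlinarith
  have hjoint : δ ^ 2 / 2 * M * L₁.card ≤ ∑ ℓ ∈ L₁, ∑ ℓ0 ∈ L₀, avg ℓ0 (fun p => ind (p ∈ A) *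
      avg (ℓ - ℓ0) (fun s => ind (p ++ s ∈ A))) := by
    rw [Finset.sum_comm]
    have h1 : ∀ ℓ0 ∈ L₀, δ ^ 2 / 2 * r ≤ ∑ ℓ ∈ L₁, avg ℓ0 (fun p => ind (p ∈ A) *
        avg (ℓ - ℓ0) (fun s => ind (p ++ s ∈ A))) := by
      intro ℓ0 hℓ0
      have hav := avg_isAv (α := Fin (j + 1)) ℓ0
      have h2 : ∑ ℓ ∈ L₁, avg ℓ0 (fun p => avg (ℓ - ℓ0) (fun s => ind (p ++ s ∈ A))) ≥ r * δ := by
        have h3 : ∀ ℓ ∈ L₁, δ ≤ avg ℓ0 (fun p => avg (ℓ - ℓ0) (fun s => ind (p ++ s ∈ A))) := by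
          intro ℓ hℓ
          have h4 := hlt ℓ0 hℓ0 ℓ hℓ
          rw [← avg_append ℓ0 (ℓ - ℓ0) (fun x => ind (x ∈ A)),
            show ℓ0 + (ℓ - ℓ0) = ℓ by omega]
          exact hA ℓ (Finset.mem_sdiff.mp hℓ).1
        have h5 := Finset.card_nsmul_le_sum L₁ _ δ h3
        rwa [nsmul_eq_mul] at h5
      rw [← hav.sum] at h2 ⊢
      have h6 : avg ℓ0 (fun p => (∑ ℓ ∈ L₁, avg (ℓ - ℓ0) (fun s => ind (p ++ s ∈ A))) -
          (C * r) * (1 - ind (p ∈ A))) ≤ avg ℓ0 (fun p => ∑ ℓ ∈ L₁, ind (p ∈ A) *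
        avg (ℓ - ℓ0) (fun s => ind (p ++ s ∈ A))) := by
        apply hav.mono
        intro p hp
        rw [← Finset.mul_sum]
        have h7 := hX ℓ0 hℓ0 p hp
        by_cases h8 : p ∈ A
        · rw [ind_true h8]; linarith
        · rw [ind_false h8]; linarith
      rw [hav.sub, hav.smul, hav.sub, hav.const] at h6
      have h9 := hA ℓ0 (hL₀ hℓ0)
      refine le_trans ?_ h6
      have hCr : 0 ≤ C * r := by positivity
      have h10 : C * r * (1 - avg ℓ0 (fun p => ind (p ∈ A))) ≤ C * r * (1 - δ) := by
        gcongr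
      have h11 : δ ^ 2 / 2 ≤ δ - C * (1 - δ) := by
        rw [hC]
        nlinarith [pow_pos hδ0 3, pow_pos hδ0 2]
      nlinarith
    have h2 := Finset.card_nsmul_le_sum L₀ _ _ h1
    rw [nsmul_eq_mul, hL₀M] at h2
    refine le_trans (le_of_eq ?_) h2
    ring
  obtain ⟨c, w, h1, h2, h3, h4, h5⟩ := hpair L₀ L₁ hL₀M hne hlt A hjoint
  have h6 := markov L₁ (fun ℓ => avg (ℓ - (c.length + 1 + w.length))
    (fun s => ind (∀ a, c ++ a :: w.map (fun o => o.getD a) ++ s ∈ A))) (Θ / 2)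
      (by positivity) (fun ℓ _ => (avg_isAv _).le_const _ _ fun x _ => ind_le_one _)
  refine ⟨L₁.filter (fun ℓ => Θ / 2 ≤ avg (ℓ - (c.length + 1 + w.length))
    (fun s => ind (∀ a, c ++ a :: w.map (fun o => o.getD a) ++ s ∈ A))),
    Finset.filter_subset _ _, ?_, c, none :: w, rfl, ?_, h3, ?_, ?_⟩
  rotate_right
  · intro ℓ hℓ
    have h7 := (Finset.mem_filter.mp hℓ).2
    have h8 : c.length + (none :: w : VWord (j + 1)).length = c.length + 1 + w.length := by
      simp; omega
    rw [h8]
    exact h7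
  · have h7 : Θ * r ≤ θ * r := by gcongr
    have h8 : (n : ℝ) ≤ (L₁.filter (fun ℓ => Θ / 2 ≤ avg (ℓ - (c.length + 1 + w.length))
        (fun s => ind (∀ a, c ++ a :: w.map (fun o => o.getD a) ++ s ∈ A)))).card := by
      rw [← hr] at h5 h6
      linarith
    exact_mod_cast h8
  · rintro x (rfl | ⟨a, rfl⟩)
    · exact h1
    · exact h2 a
  · have h8 : c.length + (none :: w : VWord (j + 1)).length = c.length + 1 + w.length := by
      simp; omega
    rw [h8]
    exact h4

end DCS

/-- Proposition 7.5 (with the numerical invariants `Λ₀`, `Θ₀` abstracted):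
either the density of `A` increments on a long shifted set of levels, or one finds a
Carlson–Simpson line `V = {c} ∪ {c ⌢ w(a) : a ∈ [k]}` inside `A` with level set
`{|c|, |c| + |w|} ⊆ L₀` whose top level has many common extensions into `A`. -/
theorem density_dichotomy (k : ℕ) (hk : 2 ≤ k) (δ : ℝ) (hδ0 : 0 < δ) (hδ1 : δ ≤ 1) :
    ∃ (Λ₀ : ℕ) (Θ₀ : ℝ), 1 ≤ Λ₀ ∧ 0 < Θ₀ ∧ Θ₀ ≤ δ ^ 2 / 8 ∧
      ∀ L : Finset ℕ, L.Nonempty → ∀ A : Set (Word k), (∀ ℓ ∈ L, δ ≤ dens k ℓ A) →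
        ∀ n : ℕ, 1 ≤ n → Λ₀ + ⌈2 / Θ₀ * (n : ℝ)⌉₊ ≤ L.card →
        ∀ L₀ : Finset ℕ, L₀ ⊆ L → L₀.card = Λ₀ →
          (∀ x ∈ L₀, ∀ y ∈ L \ L₀, x < y) →
          ((∃ L' ⊆ L \ L₀, n ≤ L'.card ∧ ∃ ℓ₀ ∈ L₀, ∃ t₀ : Word k, t₀.length = ℓ₀ ∧
              ∀ ℓ ∈ L', δ + δ ^ 2 / 8 ≤ dens k (ℓ - ℓ₀) {s | t₀ ++ s ∈ A}) ∨
            (∃ L'' ⊆ L \ L₀, n ≤ L''.card ∧ ∃ (c : Word k) (w : VWord k),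
              IsLeftVar w ∧
              insert c {x | ∃ a : Fin k, x = c ++ subst w a} ⊆ A ∧
              c.length ∈ L₀ ∧ c.length + w.length ∈ L₀ ∧
              ∀ ℓ ∈ L'', Θ₀ / 2 ≤ dens k (ℓ - (c.length + w.length))
                {s | ∀ a : Fin k, c ++ subst w a ++ s ∈ A})) := by
  exact DCS.final k hk δ hδ0 hδ1
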